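/- arXiv:1209.3385 — 2 statements merged into one kernel-verified Lean document; each statement's English description precedes it below -/
import Mathlib

section
/- For every n∈ℕ, W>0, λ₀∈(−2,2) and ξ₁,ξ₂∈ℝ: F₂(λ₀+ξ₁/(Nρ(λ₀)), λ₀+ξ₂/(Nρ(λ₀))) = −C(ξ)·(det J)^{−2}·(4π)^{−N}·∫ exp{−(W²/2)∑_{j=−n+1}^{n}Tr(V_j*A_jV_j−A_{j−1})²}·exp{−∑_{j=−n}^{n}(f(a_j)+f(b_j)) − (i/(Nρ(λ₀)))∑_{j=−n}^{n}Tr((P_jU_{−n})* A_j (P_jU_{−n}) ξ̂)}·∏_{l=−n}^{n}(a_l−b_l)² dμ(U_{−n}) da db ∏_{q=−n+1}^{n}dμ(V_q), where the integral runs over a=(a_{−n},…,a_n)∈ℝ^N, b=(b_{−n},…,b_n)∈ℝ^N, and over U_{−n},V_{−n+1},…,V_n in the unitary group U(2) with normalized Haar measure dμ; here A_j=diag(a_j,b_j), P_j=V_jV_{j−1}⋯V_{−n+1} (with P_{−n}=I), ξ̂=diag(ξ₁,ξ₂), f(x)=(x+iλ₀/2)²/2−Log(x−iλ₀/2) with Log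 the principal branch of the complex logarithm (so exp{−f(x)}=(x−iλ₀/2)·exp{−(x+iλ₀/2)²/2}), and C(ξ)=exp{λ₀(ξ₁+ξ₂)/(2ρ(λ₀)) + (ξ₁²+ξ₂²)/(2Nρ(λ₀)²)}. -/
open MeasureTheory

/-- Borel σ-algebra on 2×2 complex matrices. -/
noncomputable instance : MeasurableSpace (Matrix (Fin 2) (Fin 2) ℂ) := borel _

instance : BorelSpace (Matrix (Fin 2) (Fin 2) ℂ) := ⟨rfl⟩

/-- The `N×N` matrix `−Δ` (discrete Neumann Laplacian). -/
noncomputable def negLap (m : ℕ) : Matrix (Fin m) (Fin m) ℝ :=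
  Matrix.of fun i j =>
    if i = j then 2 - (if (i : ℕ) = 0 then 1 else 0) - (if (i : ℕ) = m - 1 then 1 else 0)
    else if (i : ℕ) + 1 = (j : ℕ) ∨ (j : ℕ) + 1 = (i : ℕ) then -1 else 0

/-- `J = (−W²Δ + 1)^{−1}`. -/
noncomputable def Jmat (n : ℕ) (W : ℝ) : Matrix (Fin (2*n+1)) (Fin (2*n+1)) ℝ :=
  (W^2 • negLap (2*n+1) + 1)⁻¹

/-- The Hermitian band matrix built from diagonal entries `d` and off-diagonal data `o`. -/
noncomputable def bandH (n : ℕ) (d : Fin (2*n+1) → ℝ)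
    (o : {q : Fin (2*n+1) × Fin (2*n+1) // q.1 < q.2} → ℝ × ℝ) :
    Matrix (Fin (2*n+1)) (Fin (2*n+1)) ℂ :=
  Matrix.of fun i j =>
    if h : i < j then ⟨(o ⟨(i, j), h⟩).1, (o ⟨(i, j), h⟩).2⟩
    else if h' : j < i then ⟨(o ⟨(j, i), h'⟩).1, -((o ⟨(j, i), h'⟩).2)⟩
    else ((d i : ℝ) : ℂ)

/-- The Gaussian density of the 1D band-matrix ensemble. -/
noncomputable def bandDens (n : ℕ) (W : ℝ) (d : Fin (2*n+1) → ℝ)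
    (o : {q : Fin (2*n+1) × Fin (2*n+1) // q.1 < q.2} → ℝ × ℝ) : ℝ :=
  (∏ i, (Real.sqrt (2 * Real.pi * Jmat n W i i))⁻¹ *
      Real.exp (-(d i)^2 / (2 * Jmat n W i i))) *
  ∏ q : {q : Fin (2*n+1) × Fin (2*n+1) // q.1 < q.2},
    (Real.pi * Jmat n W q.1.1 q.1.2)⁻¹ *
      Real.exp (-(((o q).1)^2 + ((o q).2)^2) / Jmat n W q.1.1 q.1.2)

/-- `F₂(λ₁,λ₂) = E{det(λ₁−H)·det(λ₂−H)}`. -/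
noncomputable def F2 (n : ℕ) (W : ℝ) (l1 l2 : ℝ) : ℂ :=
  ∫ ω : (Fin (2*n+1) → ℝ) × ({q : Fin (2*n+1) × Fin (2*n+1) // q.1 < q.2} → ℝ × ℝ),
    ((bandDens n W ω.1 ω.2 : ℝ) : ℂ) *
      ((l1 : ℂ) • (1 : Matrix (Fin (2*n+1)) (Fin (2*n+1)) ℂ) - bandH n ω.1 ω.2).det *
      ((l2 : ℂ) • (1 : Matrix (Fin (2*n+1)) (Fin (2*n+1)) ℂ) - bandH n ω.1 ω.2).det

/-- `ρ(λ) = √(4−λ²)/(2π)`. -/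
noncomputable def rho (l : ℝ) : ℝ := Real.sqrt (4 - l^2) / (2 * Real.pi)

/-- Extend `x : Fin m → ℝ` to `ℕ → ℝ` by zero. -/
noncomputable def pad (m : ℕ) (x : Fin m → ℝ) : ℕ → ℝ :=
  fun j => if h : j < m then x ⟨j, h⟩ else 0

/-- `f(x) = (x+iλ₀/2)²/2 − Log(x−iλ₀/2)` (principal branch). -/
noncomputable def ffun (l0 : ℝ) (x : ℝ) : ℂ :=
  ((x : ℂ) + Complex.I * (l0 : ℂ)/2)^2/2 - Complex.log ((x : ℂ) - Complex.I * (l0 : ℂ)/2)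

/-- `A_j = diag(a_j, b_j)` (indices through `ℕ`, extended by zero). -/
noncomputable def Amat (n : ℕ) (a b : Fin (2*n+1) → ℝ) (j : ℕ) : Matrix (Fin 2) (Fin 2) ℂ :=
  Matrix.diagonal ![((pad (2*n+1) a j : ℝ) : ℂ), ((pad (2*n+1) b j : ℝ) : ℂ)]

/-- The unitary `V_j` as a matrix: slot `0` is `U_{−n}`, slots `1,…,N−1` are
`V_{−n+1},…,V_n`; out of range it is `1`. -/
noncomputable def Vpad (n : ℕ) (V : Fin (2*n+1) → Matrix.unitaryGroup (Fin 2) ℂ) (j : ℕ) :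
    Matrix (Fin 2) (Fin 2) ℂ :=
  if h : j < 2*n+1 then (V ⟨j, h⟩ : Matrix (Fin 2) (Fin 2) ℂ) else 1

/-- `P_j = V_j V_{j−1} ⋯ V_{−n+1}` with `P_{−n} = I` (slot indexing as in `Vpad`). -/
noncomputable def Pprod (n : ℕ) (V : Fin (2*n+1) → Matrix.unitaryGroup (Fin 2) ℂ) :
    ℕ → Matrix (Fin 2) (Fin 2) ℂ
  | 0 => 1
  | (j + 1) => Vpad n V (j + 1) * Pprod n V j

/-- The integrand of the representation (2.11):
`exp{−(W²/2)∑Tr(V_j*A_jV_j−A_{j−1})² − ∑(f(a_j)+f(b_j))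
  − (i/(Nρ))∑Tr((P_jU_{−n})*A_j(P_jU_{−n})ξ̂)}·∏(a_l−b_l)²`. -/
noncomputable def G2 (n : ℕ) (W l0 ξ₁ ξ₂ : ℝ) (a b : Fin (2*n+1) → ℝ)
    (V : Fin (2*n+1) → Matrix.unitaryGroup (Fin 2) ℂ) : ℂ :=
  Complex.exp
    (-(((W : ℝ) : ℂ)^2/2) * ∑ j ∈ Finset.Ico 1 (2*n+1),
        ((star (Vpad n V j) * Amat n a b j * Vpad n V j - Amat n a b (j-1))^2).trace
      - ∑ j ∈ Finset.range (2*n+1),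
          (ffun l0 (pad (2*n+1) a j) + ffun l0 (pad (2*n+1) b j))
      - (Complex.I / (((2*n+1 : ℝ) * rho l0 : ℝ) : ℂ)) * ∑ j ∈ Finset.range (2*n+1),
          (star (Pprod n V j * (V ⟨0, Nat.succ_pos _⟩ : Matrix (Fin 2) (Fin 2) ℂ)) *
            Amat n a b j *
            (Pprod n V j * (V ⟨0, Nat.succ_pos _⟩ : Matrix (Fin 2) (Fin 2) ℂ)) *
            Matrix.diagonal ![((ξ₁ : ℝ) : ℂ), ((ξ₂ : ℝ) : ℂ)]).trace)
  * ∏ l ∈ Finset.range (2*n+1),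
      (((pad (2*n+1) a l - pad (2*n+1) b l : ℝ) : ℂ))^2

/-- `C(ξ) = exp{λ₀(ξ₁+ξ₂)/(2ρ(λ₀)) + (ξ₁²+ξ₂²)/(2Nρ(λ₀)²)}`. -/
noncomputable def Cxi (n : ℕ) (l0 ξ₁ ξ₂ : ℝ) : ℝ :=
  Real.exp (l0 * (ξ₁ + ξ₂) / (2 * rho l0) + (ξ₁^2 + ξ₂^2) / (2 * (2*n+1) * (rho l0)^2))

/-!
`F₂` is a Gaussian expectation of the determinant of the block-diagonal matrix with blocks
`λ₁ - H` and `λ₂ - H`. Expanding such an expectation along a row and integrating by parts gives a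
recursion over minors into which only the means and covariances of the entries enter, and
relabelling the two removed columns turns a covariance `C(p, q; r, s)` into `-C(p, s; r, q)`. This
exchange, the counterpart of Grassmann variables and the Hubbard–Stratonovich transformation, maps
`⊕ₐ (λₐ - H)` to `⊕_j (t + i X_j)`, where `X_{-n}, …, X_n` is a chain of Hermitian `2 × 2` matrices
whose entries have covariance `J` along the chain; the free constant `t = λ₀ / 2` moves the rest of
the means into a source term `-i Tr (diag (λ₁ - t, λ₂ - t) X_j)` in the Gaussian weight. Finally
each `X_j` is diagonalised as `P_j* A_j P_j` by Weyl's integration formula for `U(2)`, and the map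
from `(V_j)` to the cumulative products `V_j ⋯ V_{-n}` preserves the product of Haar measures.
-/
section Derivation

variable {𝕜 R : Type*} [CommRing 𝕜] [CommRing R] [Algebra 𝕜 R] (D : Derivation 𝕜 R R)

theorem derivation_prod {ι : Type*} [DecidableEq ι] (s : Finset ι) (f : ι → R) :
    D (∏ i ∈ s, f i) = ∑ i ∈ s, D (f i) * ∏ j ∈ s.erase i, f j := by
  induction s using Finset.induction_on with
  | empty => simp
  | insert a s ha ih =>
    have hs : ∀ i ∈ s, D (f i) * ∏ j ∈ (insert a s).erase i, f j =
        f a * (D (f i) * ∏ j ∈ s.erase i, f j) := fun i hi => by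
      rw [Finset.erase_insert_of_ne (ne_of_mem_of_not_mem hi ha).symm,
        Finset.prod_insert (by simp [ha])]
      ring
    rw [Finset.prod_insert ha, D.leibniz, ih, Finset.sum_insert ha, Finset.erase_insert ha,
      Finset.sum_congr rfl hs, smul_eq_mul, smul_eq_mul, Finset.mul_sum]
    ring

theorem derivation_det_eq_sum_updateCol {ι : Type*} [DecidableEq ι] [Fintype ι]
    (A : Matrix ι ι R) : D A.det = ∑ c, (A.updateCol c fun r => D (A r c)).det := by
  simp only [Matrix.det_apply, map_sum, Units.smul_def, map_zsmul]
  rw [Finset.sum_comm]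
  refine Finset.sum_congr rfl fun σ _ => ?_
  rw [derivation_prod, Finset.smul_sum]
  refine Finset.sum_congr rfl fun c _ => congrArg _ ?_
  rw [← Finset.mul_prod_erase Finset.univ _ (Finset.mem_univ c), Matrix.updateCol_self]
  congr 1
  refine Finset.prod_congr rfl fun j hj => ?_
  rw [Matrix.updateCol_ne (Finset.ne_of_mem_erase hj)]

theorem derivation_det_eq_sum_minors {m : ℕ} (A : Matrix (Fin (m + 1)) (Fin (m + 1)) R) :
    D A.det = ∑ c : Fin (m + 1), ∑ r : Fin (m + 1), (-1) ^ ((r : ℕ) + (c : ℕ)) * D (A r c) *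
      (A.submatrix r.succAbove c.succAbove).det := by
  rw [derivation_det_eq_sum_updateCol]
  refine Finset.sum_congr rfl fun c _ => ?_
  rw [Matrix.det_succ_column _ c]
  refine Finset.sum_congr rfl fun r _ => ?_
  rw [Matrix.submatrix_updateCol_succAbove, Matrix.updateCol_self]

end Derivation

section Wick

variable {𝕜 R R₁ R₂ P : Type*} [CommRing 𝕜] [CommRing R] [Algebra 𝕜 R]
  [CommRing R₁] [Algebra 𝕜 R₁] [CommRing R₂] [Algebra 𝕜 R₂]

theorem map_algebraMap_mul (E : R →ₗ[𝕜] 𝕜) (c : 𝕜) (x : R) :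
    E (algebraMap 𝕜 R c * x) = c * E x := by
  rw [← Algebra.smul_def, map_smul, smul_eq_mul]

/-- Under the functional `E`, the entries of `M` behave like jointly Gaussian variables with means
`mean p q` and covariances `cov p q r s` of the `(p, q)` and `(r, s)` entries: Gaussian integration
by parts holds, with a derivation playing the role of the gradient in the direction `cov p q`. -/
def IsWickMatrix (E : R →ₗ[𝕜] 𝕜) (M : Matrix P P R) (mean : P → P → 𝕜)
    (cov : P → P → P → P → 𝕜) : Prop :=
  ∀ p q, ∃ D : Derivation 𝕜 R R, (∀ x, E (M p q * x) = mean p q * E x + E (D x)) ∧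
    ∀ r s, D (M r s) = algebraMap 𝕜 R (cov p q r s)

namespace IsWickMatrix

variable {E : R →ₗ[𝕜] 𝕜} {M : Matrix P P R} {mean : P → P → 𝕜} {cov : P → P → P → P → 𝕜}

theorem congr (h : IsWickMatrix E M mean cov) {mean' : P → P → 𝕜} {cov' : P → P → P → P → 𝕜}
    (hmean : ∀ p q, mean p q = mean' p q) (hcov : ∀ p q r s, cov p q r s = cov' p q r s) :
    IsWickMatrix E M mean' cov' := by
  obtain rfl : mean = mean' := funext₂ hmean
  obtain rfl : cov = cov' := funext₂ fun p q => funext₂ (hcov p q)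
  exact h

theorem map_apply (h : IsWickMatrix E M mean cov) (p q : P) : E (M p q) = mean p q * E 1 := by
  obtain ⟨D, hD, -⟩ := h p q
  simpa using hD 1

theorem map_apply_mul_det (h : IsWickMatrix E M mean cov) (p q : P) {m : ℕ}
    (f g : Fin (m + 1) → P) :
    E (M p q * (M.submatrix f g).det) = mean p q * E (M.submatrix f g).det +
      ∑ r : Fin (m + 1), ∑ c : Fin (m + 1), (-1) ^ ((r : ℕ) + (c : ℕ)) * cov p q (f r) (g c) *
        E (M.submatrix (f ∘ r.succAbove) (g ∘ c.succAbove)).det := by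
  obtain ⟨D, hD, hcov⟩ := h p q
  rw [hD, derivation_det_eq_sum_minors, Finset.sum_comm, map_sum]
  simp only [map_sum, Matrix.submatrix_apply, Matrix.submatrix_submatrix, hcov]
  congr 1
  refine Finset.sum_congr rfl fun r _ => Finset.sum_congr rfl fun c _ => ?_
  rw [← map_algebraMap_mul, map_mul (algebraMap 𝕜 R), map_pow, map_neg, map_one]

theorem map_det_succ_succ (h : IsWickMatrix E M mean cov) {m : ℕ} (f g : Fin (m + 2) → P) :
    E (M.submatrix f g).det =
      ∑ c : Fin (m + 2), (-1) ^ (c : ℕ) * (mean (f 0) (g c) *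
          E (M.submatrix (f ∘ Fin.succ) (g ∘ c.succAbove)).det) +
      ∑ r : Fin (m + 1), (-1) ^ (r : ℕ) * ∑ x : Fin (m + 2) × Fin (m + 1),
        (-1) ^ ((x.1 : ℕ) + (x.2 : ℕ)) * cov (f 0) (g x.1) (f r.succ) (g (x.1.succAbove x.2)) *
        E (M.submatrix (f ∘ Fin.succ ∘ r.succAbove)
          (g ∘ x.1.succAbove ∘ x.2.succAbove)).det := by
  have hrow (c : Fin (m + 2)) : E ((-1) ^ (c : ℕ) * (M.submatrix f g) 0 c *
        ((M.submatrix f g).submatrix Fin.succ c.succAbove).det) =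
      (-1) ^ (c : ℕ) * E (M (f 0) (g c) * (M.submatrix (f ∘ Fin.succ) (g ∘ c.succAbove)).det) := by
    rw [← map_algebraMap_mul, map_pow, map_neg, map_one, mul_assoc]
    rfl
  rw [Matrix.det_succ_row_zero, map_sum]
  simp only [hrow, h.map_apply_mul_det, mul_add, Finset.sum_add_distrib, Fintype.sum_prod_type,
    Finset.mul_sum]
  congr 1
  rw [Finset.sum_comm]
  refine Finset.sum_congr rfl fun r _ => Finset.sum_congr rfl fun c _ =>
    Finset.sum_congr rfl fun e _ => ?_
  simp only [Function.comp_apply, Function.comp_assoc]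
  ring

/-- The involution exchanging the two columns removed in `map_det_succ_succ`. -/
def columnSwap (m : ℕ) : Equiv.Perm (Fin (m + 2) × Fin (m + 1)) :=
  Function.Involutive.toPerm (fun x => (x.1.succAbove x.2, x.2.predAbove x.1)) fun x =>
    Prod.ext (Fin.succAbove_succAbove_predAbove x.1 x.2)
      (Fin.predAbove_predAbove_succAbove x.1 x.2)

theorem map_det_submatrix_eq {E₁ : R₁ →ₗ[𝕜] 𝕜} {E₂ : R₂ →ₗ[𝕜] 𝕜} {M₁ : Matrix P P R₁}
    {M₂ : Matrix P P R₂} {cov₁ cov₂ : P → P → P → P → 𝕜}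
    (h₁ : IsWickMatrix E₁ M₁ mean cov₁) (h₂ : IsWickMatrix E₂ M₂ mean cov₂)
    (hcov : ∀ p q r s, cov₁ p q r s = -cov₂ p s r q) (hone : E₁ 1 = E₂ 1) (m : ℕ) :
    ∀ f g : Fin m → P, E₁ (M₁.submatrix f g).det = E₂ (M₂.submatrix f g).det := by
  induction m using Nat.twoStepInduction with
  | zero => simpa using hone
  | one =>
    intro f g
    simp only [Matrix.det_unique, Matrix.submatrix_apply, h₁.map_apply, h₂.map_apply, hone]
  | more m ih ih' =>
    intro f g
    rw [h₁.map_det_succ_succ, h₂.map_det_succ_succ]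
    simp only [ih, ih']
    congr 1
    refine Finset.sum_congr rfl fun r _ => congrArg _ ?_
    rw [← Equiv.sum_comp (columnSwap m)]
    refine Finset.sum_congr rfl fun ⟨c, e⟩ _ => ?_
    have hg : g ∘ (c.succAbove e).succAbove ∘ (e.predAbove c).succAbove =
        g ∘ c.succAbove ∘ e.succAbove :=
      funext fun k => congrArg g (Fin.succAbove_succAbove_succAbove_predAbove ..)
    have hswap : columnSwap m (c, e) = (c.succAbove e, e.predAbove c) := rfl
    simp only [hswap, Fin.neg_one_pow_succAbove_add_predAbove,
      Fin.succAbove_succAbove_predAbove, hcov, hg]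
    ring

/-- Determinants of Gaussian matrices see the covariance only up to an exchange of the two column
indices, at the price of a sign: the two columns removed together with two rows can be taken in
either order. -/
theorem map_det_eq [Fintype P] [DecidableEq P] {E₁ : R₁ →ₗ[𝕜] 𝕜} {E₂ : R₂ →ₗ[𝕜] 𝕜}
    {M₁ : Matrix P P R₁} {M₂ : Matrix P P R₂} {cov₁ cov₂ : P → P → P → P → 𝕜}
    (h₁ : IsWickMatrix E₁ M₁ mean cov₁) (h₂ : IsWickMatrix E₂ M₂ mean cov₂)
    (hcov : ∀ p q r s, cov₁ p q r s = -cov₂ p s r q) (hone : E₁ 1 = E₂ 1) :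
    E₁ M₁.det = E₂ M₂.det := by
  let e := Fintype.equivFin P
  rw [← M₁.det_submatrix_equiv_self e.symm, ← M₂.det_submatrix_equiv_self e.symm]
  exact map_det_submatrix_eq h₁ h₂ hcov hone _ e.symm e.symm

end IsWickMatrix

end Wick
section GaussianIntegral

open MvPolynomial Matrix

variable {K : Type*}

/-- Evaluation of a complex polynomial at a real point. -/
noncomputable def realEval (x : K → ℝ) : MvPolynomial K ℂ →ₐ[ℂ] ℂ :=
  aeval fun k => (x k : ℂ)

@[simp]
theorem realEval_X (x : K → ℝ) (k : K) : realEval x (X k) = x k := aeval_X _ _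

@[simp]
theorem realEval_C (x : K → ℝ) (c : ℂ) : realEval x (C c) = c := aeval_C _ _

theorem continuous_realEval (p : MvPolynomial K ℂ) : Continuous fun x : K → ℝ => realEval x p := by
  induction p using MvPolynomial.induction_on with
  | C a => simpa only [realEval_C] using continuous_const
  | add p q hp hq =>
    simp only [map_add]
    exact hp.add hq
  | mul_X p k hp =>
    simp only [map_mul, realEval_X]
    fun_prop

theorem hasLineDerivAt_realEval [DecidableEq K] (p : MvPolynomial K ℂ) (k : K) (x : K → ℝ) :
    HasLineDerivAt ℝ (fun x => realEval x p) (realEval x (pderiv k p)) x (Pi.single k 1) := by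
  unfold HasLineDerivAt
  induction p using MvPolynomial.induction_on with
  | C a => simpa using hasDerivAt_const (0 : ℝ) a
  | add p q hp hq =>
    simp only [map_add]
    exact hp.add hq
  | mul_X p i hp =>
    have hX : HasDerivAt (fun t : ℝ => (((x + t • (Pi.single k 1 : K → ℝ)) i : ℝ) : ℂ))
        (realEval x (pderiv k (X i))) 0 := by
      have h := ((hasDerivAt_id (0 : ℝ)).mul_const
        ((Pi.single k (1 : ℝ) : K → ℝ) i)).const_add (x i)
      refine (h.ofReal_comp.congr_deriv ?_ :)
      rw [pderiv_X]
      by_cases h : i = k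
      · subst h
        simp
      · simp [Pi.single_eq_of_ne h]
    simp only [map_mul, realEval_X, pderiv_mul, map_add]
    refine (hp.mul hX).congr_deriv ?_
    simp

variable [Fintype K]

theorem integrable_realEval_mul {w : (K → ℝ) → ℂ} (hcont : Continuous w) {A c : ℝ} (hc : 0 < c)
    (hw : ∀ x, ‖w x‖ ≤ A * Real.exp (-c * ∑ k, x k ^ 2)) (p : MvPolynomial K ℂ) :
    Integrable fun x => realEval x p * w x := by
  induction p using MvPolynomial.induction_on' with
  | monomial u a =>
    have hone (m : ℕ) : Integrable fun y : ℝ => y ^ m * Real.exp (-c * y ^ 2) := by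
      simpa using integrable_rpow_mul_exp_neg_mul_sq hc (s := m)
        (by linarith [m.cast_nonneg (α := ℝ)])
    have hprod : Integrable fun x : K → ℝ => ∏ k, x k ^ u k * Real.exp (-c * x k ^ 2) :=
      Integrable.fintype_prod (f := fun k y => y ^ u k * Real.exp (-c * y ^ 2)) fun k => hone (u k)
    refine (hprod.norm.const_mul (‖a‖ * A)).mono'
      ((continuous_realEval _).mul hcont).aestronglyMeasurable (.of_forall fun x => ?_)
    have hmono : realEval x (monomial u a) = a * ∏ k, (x k : ℂ) ^ u k := by
      simp [realEval, aeval_monomial, Finsupp.prod_fintype]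
    rw [norm_mul, hmono, norm_mul, norm_prod, norm_prod]
    simp only [norm_mul, norm_pow, Complex.norm_real, Finset.prod_mul_distrib, Real.norm_eq_abs,
      Real.abs_exp, ← Real.exp_sum, ← Finset.mul_sum]
    calc _ ≤ ‖a‖ * (∏ k, |x k| ^ u k) * (A * Real.exp (-c * ∑ k, x k ^ 2)) := by gcongr; exact hw x
      _ = _ := by ring
  | add p q hp hq => simpa only [map_add, add_mul, Pi.add_def] using hp.add hq

/-- The exponent `-⟨x, Q x⟩ + ⟨ℓ, x⟩` of a Gaussian weight, as a polynomial in `x`. -/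
noncomputable def gaussianExponent (Q : Matrix K K ℝ) (ℓ : K → ℂ) : MvPolynomial K ℂ :=
  -∑ i, ∑ j, C (Q i j : ℂ) * (X i * X j) + ∑ k, C (ℓ k) * X k

/-- The Gaussian weight `exp(-⟨x, Q x⟩ + ⟨ℓ, x⟩)`; the linear term may be complex. -/
noncomputable def gaussianWeight (Q : Matrix K K ℝ) (ℓ : K → ℂ) (x : K → ℝ) : ℂ :=
  Complex.exp (realEval x (gaussianExponent Q ℓ))

variable {Q : Matrix K K ℝ} (ℓ : K → ℂ)

theorem realEval_gaussianExponent (x : K → ℝ) :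
    realEval x (gaussianExponent Q ℓ) = -((x ⬝ᵥ Q *ᵥ x : ℝ) : ℂ) + ∑ k, ℓ k * x k := by
  simp only [gaussianExponent, map_add, map_neg, map_sum, map_mul, realEval_C, realEval_X,
    dotProduct, mulVec, Finset.mul_sum, Complex.ofReal_sum, Complex.ofReal_mul]
  congr 2
  exact Finset.sum_congr rfl fun i _ => Finset.sum_congr rfl fun j _ => by ring

theorem continuous_gaussianWeight : Continuous (gaussianWeight Q ℓ) :=
  Complex.continuous_exp.comp (continuous_realEval _)

theorem pderiv_gaussianExponent (hQ : Q.IsSymm) (k : K) :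
    pderiv k (gaussianExponent Q ℓ) = -(2 * ∑ j, C (Q k j : ℂ) * X j) + C (ℓ k) := by
  classical
  have hsymm (i : K) : Q i k = Q k i := hQ.apply k i
  simp only [gaussianExponent, map_add, map_neg, map_sum, pderiv_mul, pderiv_C, pderiv_X,
    Pi.single_apply, mul_add, Finset.sum_add_distrib, ite_mul, mul_ite, one_mul, mul_one, zero_mul,
    zero_add, mul_zero, Finset.sum_ite_eq', Finset.sum_ite_irrel, Finset.sum_const_zero,
    Finset.mem_univ, if_true, hsymm, two_mul]

theorem hasLineDerivAt_gaussianWeight [DecidableEq K] (k : K) (x : K → ℝ) :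
    HasLineDerivAt ℝ (gaussianWeight Q ℓ)
      (realEval x (pderiv k (gaussianExponent Q ℓ)) * gaussianWeight Q ℓ x) x (Pi.single k 1) := by
  refine (HasDerivAt.cexp (hasLineDerivAt_realEval (gaussianExponent Q ℓ) k x)).congr_deriv ?_
  simp only [zero_smul, add_zero, gaussianWeight]
  ring

open scoped MatrixOrder in
theorem exists_eq_transpose_mul_self [DecidableEq K] (hQ : Q.PosDef) :
    ∃ B : Matrix K K ℝ, Q = Bᵀ * B ∧ B.det ≠ 0 := by
  obtain ⟨B, hB⟩ := CStarAlgebra.nonneg_iff_eq_star_mul_self.mp hQ.posSemidef.nonneg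
  rw [star_eq_conjTranspose, conjTranspose_eq_transpose_of_trivial] at hB
  refine ⟨B, hB, fun h => hQ.det_pos.ne' ?_⟩
  rw [hB, det_mul, h, mul_zero]

theorem dotProduct_transpose_mul_self_mulVec (B : Matrix K K ℝ) (x : K → ℝ) :
    x ⬝ᵥ (Bᵀ * B) *ᵥ x = ∑ k, (B *ᵥ x) k ^ 2 := by
  rw [← mulVec_mulVec, dotProduct_mulVec, vecMul_transpose]
  simp [dotProduct, sq]

theorem exists_mul_sum_sq_le_dotProduct_mulVec (hQ : Q.PosDef) :
    ∃ c > 0, ∀ x : K → ℝ, c * ∑ k, x k ^ 2 ≤ x ⬝ᵥ Q *ᵥ x := by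
  classical
  obtain ⟨B, rfl, hB⟩ := exists_eq_transpose_mul_self hQ
  let L := toEuclideanLin B
  have hinj : Function.Injective L := fun x y hxy => by
    have h : B *ᵥ x.ofLp = B *ᵥ y.ofLp := congrArg WithLp.ofLp hxy
    exact WithLp.ofLp_injective _
      (mulVec_injective_iff_isUnit.mpr ((isUnit_iff_isUnit_det B).mpr hB.isUnit) h)
  obtain ⟨κ, hκ, hL⟩ := (LinearMap.injective_iff_antilipschitz L).mp hinj
  refine ⟨((κ : ℝ) ^ 2)⁻¹, by positivity, fun x => ?_⟩
  have h := hL.le_mul_dist (WithLp.toLp 2 x) 0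
  rw [map_zero, dist_zero_right, dist_zero_right] at h
  have hsq := pow_le_pow_left₀ (norm_nonneg _) h 2
  rw [mul_pow, EuclideanSpace.real_norm_sq_eq, EuclideanSpace.real_norm_sq_eq] at hsq
  rw [dotProduct_transpose_mul_self_mulVec, inv_mul_le_iff₀ (by positivity)]
  exact hsq

theorem norm_gaussianWeight_le (hQ : Q.PosDef) :
    ∃ A, ∃ c > 0, ∀ x, ‖gaussianWeight Q ℓ x‖ ≤ A * Real.exp (-c * ∑ k, x k ^ 2) := by
  obtain ⟨c, hc, hcQ⟩ := exists_mul_sum_sq_le_dotProduct_mulVec hQ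
  refine ⟨Real.exp (∑ k, (ℓ k).re ^ 2 / (2 * c)), c / 2, half_pos hc, fun x => ?_⟩
  have hre : (∑ k, ℓ k * x k).re = ∑ k, (ℓ k).re * x k := by simp
  have hyoung (k : K) : (ℓ k).re * x k ≤ (ℓ k).re ^ 2 / (2 * c) + c / 2 * x k ^ 2 := by
    have hsq : (ℓ k).re ^ 2 / (2 * c) + c / 2 * x k ^ 2 - (ℓ k).re * x k =
        ((ℓ k).re - c * x k) ^ 2 / (2 * c) := by
      field_simp
      ring
    have : 0 ≤ ((ℓ k).re - c * x k) ^ 2 / (2 * c) := by positivity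
    linarith
  have hsum := Finset.sum_le_sum fun k (_ : k ∈ Finset.univ) => hyoung k
  rw [Finset.sum_add_distrib, ← Finset.mul_sum] at hsum
  rw [gaussianWeight, Complex.norm_exp, realEval_gaussianExponent, ← Real.exp_add, Complex.add_re,
    Complex.neg_re, Complex.ofReal_re, hre, Real.exp_le_exp]
  linarith [hcQ x]

theorem integrable_realEval_mul_gaussianWeight (hQ : Q.PosDef) (p : MvPolynomial K ℂ) :
    Integrable fun x => realEval x p * gaussianWeight Q ℓ x := by
  obtain ⟨A, c, hc, hw⟩ := norm_gaussianWeight_le ℓ hQ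
  exact integrable_realEval_mul (continuous_gaussianWeight ℓ) hc hw p

theorem integral_realEval_pderiv_mul_gaussianWeight (hQ : Q.PosDef) (k : K) (p : MvPolynomial K ℂ) :
    ∫ x, realEval x (pderiv k p) * gaussianWeight Q ℓ x =
      -∫ x, realEval x (pderiv k (gaussianExponent Q ℓ) * p) * gaussianWeight Q ℓ x := by
  classical
  have hint := integrable_realEval_mul_gaussianWeight ℓ hQ
  have hcomm (x : K → ℝ) : realEval x (pderiv k (gaussianExponent Q ℓ) * p) * gaussianWeight Q ℓ x =
      realEval x p * (realEval x (pderiv k (gaussianExponent Q ℓ)) * gaussianWeight Q ℓ x) := by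
    rw [map_mul]
    ring
  have hparts := integral_bilinear_hasLineDerivAt_right_eq_neg_left_of_integrable
    (μ := (volume : Measure (K → ℝ))) (f := fun x => realEval x p)
    (f' := fun x => realEval x (pderiv k p)) (v := Pi.single k 1) (B := ContinuousLinearMap.mul ℝ ℂ)
    (by simpa using hint _) (by simpa only [ContinuousLinearMap.mul_apply', ← hcomm] using hint _)
    (by simpa using hint _) (fun x _ => hasLineDerivAt_realEval p k x)
    (fun x _ => hasLineDerivAt_gaussianWeight ℓ k x)
  simp only [ContinuousLinearMap.mul_apply'] at hparts
  simp only [hcomm, hparts, neg_neg]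

theorem integral_comp_mulVec [DecidableEq K] (B : Matrix K K ℝ) (hB : B.det ≠ 0) (F : (K → ℝ) → ℂ) :
    ∫ x, F (B *ᵥ x) = (|B.det|⁻¹ : ℝ) * ∫ y, F y := by
  have hinj : Function.Injective B.mulVec :=
    mulVec_injective_iff_isUnit.mpr ((isUnit_iff_isUnit_det B).mpr hB.isUnit)
  have hemb : MeasurableEmbedding (toLin' B) :=
    (LinearMap.continuous_of_finiteDimensional _).measurableEmbedding hinj
  have hmap := hemb.integral_map (μ := volume) F
  rw [Real.map_matrix_volume_pi_eq_smul_volume_pi hB, integral_smul_measure,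
    ENNReal.toReal_ofReal (abs_nonneg _), Complex.real_smul, abs_inv] at hmap
  exact hmap.symm

theorem sum_sq_sum_mul_inv [DecidableEq K] (B : Matrix K K ℝ) :
    ∑ k, (∑ i, ℓ i * (B⁻¹ i k : ℂ)) ^ 2 = ∑ i, ∑ j, ℓ i * ((Bᵀ * B)⁻¹ i j : ℂ) * ℓ j := by
  have hinv (i j : K) : ((Bᵀ * B)⁻¹ i j : ℂ) = ∑ k, (B⁻¹ i k : ℂ) * (B⁻¹ j k : ℂ) := by
    rw [Matrix.mul_inv_rev, ← transpose_nonsing_inv, mul_apply]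
    push_cast
    rfl
  simp only [hinv, sq, Finset.mul_sum, Finset.sum_mul]
  rw [Finset.sum_comm]
  refine Finset.sum_congr rfl fun i _ => ?_
  rw [Finset.sum_comm]
  exact Finset.sum_congr rfl fun j _ => Finset.sum_congr rfl fun k _ => by ring

theorem integral_gaussianWeight [DecidableEq K] (hQ : Q.PosDef) :
    ∫ x, gaussianWeight Q ℓ x = (Real.sqrt (Real.pi ^ Fintype.card K / Q.det) : ℂ) *
      Complex.exp ((∑ i, ∑ j, ℓ i * (Q⁻¹ i j : ℂ) * ℓ j) / 4) := by
  obtain ⟨B, hBQ, hB⟩ := exists_eq_transpose_mul_self hQ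
  have hBB (x : K → ℝ) : B⁻¹ *ᵥ (B *ᵥ x) = x := by
    rw [mulVec_mulVec, nonsing_inv_mul _ hB.isUnit, one_mulVec]
  set d : K → ℂ := fun k => ∑ i, ℓ i * (B⁻¹ i k : ℂ) with hd
  have hlin (x : K → ℝ) : ∑ k, d k * ((B *ᵥ x) k : ℂ) = ∑ i, ℓ i * (x i : ℂ) := by
    conv_rhs => rw [← hBB x]
    change _ = ∑ i, ℓ i * ((∑ k, B⁻¹ i k * (B *ᵥ x) k : ℝ) : ℂ)
    simp only [hd, Complex.ofReal_sum, Complex.ofReal_mul, Finset.sum_mul,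
      Finset.mul_sum, mul_assoc]
    exact Finset.sum_comm
  have hweight (x : K → ℝ) : gaussianWeight Q ℓ x =
      Complex.exp (-1 * ∑ k, ((B *ᵥ x) k : ℂ) ^ 2 + ∑ k, d k * ((B *ᵥ x) k : ℂ)) := by
    rw [gaussianWeight, realEval_gaussianExponent, hlin, hBQ, dotProduct_transpose_mul_self_mulVec]
    push_cast
    rw [neg_one_mul]
  have hdet : Real.sqrt (Real.pi ^ Fintype.card K / Q.det) =
      |B.det|⁻¹ * Real.sqrt (Real.pi ^ Fintype.card K) := by
    rw [hBQ, det_mul, det_transpose, Real.sqrt_div (by positivity), Real.sqrt_mul_self_eq_abs,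
      div_eq_inv_mul]
  have hpi : ((Real.pi : ℂ) / 1) ^ ((Fintype.card K : ℂ) / 2) =
      (Real.sqrt (Real.pi ^ Fintype.card K) : ℂ) := by
    rw [div_one, Real.sqrt_eq_rpow, ← Real.rpow_natCast, ← Real.rpow_mul Real.pi_pos.le,
      Complex.ofReal_cpow Real.pi_pos.le]
    push_cast
    rw [mul_one_div]
  simp only [hweight]
  rw [integral_comp_mulVec B hB fun y : K → ℝ =>
      Complex.exp (-1 * ∑ k, (y k : ℂ) ^ 2 + ∑ k, d k * (y k : ℂ)),
    GaussianFourier.integral_cexp_neg_mul_sum_add (by simp), sum_sq_sum_mul_inv, ← hBQ, hdet, hpi]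
  push_cast
  rw [mul_one]
  ring

theorem integral_gaussianWeight_ne_zero (hQ : Q.PosDef) : ∫ x, gaussianWeight Q ℓ x ≠ 0 := by
  classical
  rw [integral_gaussianWeight ℓ hQ]
  have hdet := hQ.det_pos
  have hsqrt : Real.sqrt (Real.pi ^ Fintype.card K / Q.det) ≠ 0 :=
    (Real.sqrt_pos.mpr (by positivity)).ne'
  exact mul_ne_zero (Complex.ofReal_ne_zero.mpr hsqrt) (Complex.exp_ne_zero _)

/-- The normalised integral of polynomials against `gaussianWeight Q ℓ`. For real `ℓ` this is the
expectation under the Gaussian law with covariance `Q⁻¹ / 2` and mean `Q⁻¹ ℓ / 2`. -/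
noncomputable def gaussianExpectation (hQ : Q.PosDef) : MvPolynomial K ℂ →ₗ[ℂ] ℂ where
  toFun p := (∫ x, realEval x p * gaussianWeight Q ℓ x) / ∫ x, gaussianWeight Q ℓ x
  map_add' p q := by
    simp only [map_add, add_mul]
    rw [integral_add (integrable_realEval_mul_gaussianWeight ℓ hQ p)
      (integrable_realEval_mul_gaussianWeight ℓ hQ q), add_div]
  map_smul' c p := by
    simp only [map_smul, smul_eq_mul, mul_assoc, integral_const_mul, mul_div_assoc,
      RingHom.id_apply]

theorem gaussianExpectation_apply (hQ : Q.PosDef) (p : MvPolynomial K ℂ) :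
    gaussianExpectation ℓ hQ p =
      (∫ x, realEval x p * gaussianWeight Q ℓ x) / ∫ x, gaussianWeight Q ℓ x :=
  rfl

theorem gaussianExpectation_one (hQ : Q.PosDef) : gaussianExpectation ℓ hQ 1 = 1 := by
  simp only [gaussianExpectation_apply, map_one, one_mul]
  exact div_self (integral_gaussianWeight_ne_zero ℓ hQ)

theorem gaussianExpectation_pderiv (hQ : Q.PosDef) (k : K) (p : MvPolynomial K ℂ) :
    gaussianExpectation ℓ hQ (pderiv k p) =
      2 * ∑ j, (Q k j : ℂ) * gaussianExpectation ℓ hQ (X j * p) -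
        ℓ k * gaussianExpectation ℓ hQ p := by
  have hparts : gaussianExpectation ℓ hQ (pderiv k p) =
      -gaussianExpectation ℓ hQ (pderiv k (gaussianExponent Q ℓ) * p) := by
    rw [gaussianExpectation_apply, integral_realEval_pderiv_mul_gaussianWeight ℓ hQ, neg_div]
    rfl
  have hlin : pderiv k (gaussianExponent Q ℓ) * p =
      ℓ k • p - (2 : ℂ) • ∑ j, (Q k j : ℂ) • (X j * p) := by
    have hsymm : Q.IsSymm := (conjTranspose_eq_transpose_of_trivial Q).symm.trans hQ.isHermitian
    rw [pderiv_gaussianExponent ℓ hsymm]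
    simp only [smul_eq_C_mul, Finset.mul_sum, Finset.sum_mul, add_mul, neg_mul, mul_assoc,
      map_ofNat, sub_eq_neg_add]
  rw [hparts, hlin]
  simp only [map_sub, map_smul, map_sum, smul_eq_mul]
  ring

theorem gaussianExpectation_X_mul [DecidableEq K] (hQ : Q.PosDef) (i : K) (p : MvPolynomial K ℂ) :
    gaussianExpectation ℓ hQ (X i * p) =
      ∑ k, (Q⁻¹ i k / 2 : ℂ) * (ℓ k * gaussianExpectation ℓ hQ p +
        gaussianExpectation ℓ hQ (pderiv k p)) := by
  have hinv (j : K) : ∑ k, (Q⁻¹ i k : ℂ) * (Q k j : ℂ) = if i = j then 1 else 0 := by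
    have h := congrFun₂ (nonsing_inv_mul Q hQ.det_pos.ne'.isUnit) i j
    rw [mul_apply, one_apply] at h
    rw [← Complex.ofReal_one, ← Complex.ofReal_zero, ← apply_ite, ← h]
    push_cast
    rfl
  simp only [gaussianExpectation_pderiv, add_sub_cancel, Finset.mul_sum]
  rw [Finset.sum_comm]
  calc gaussianExpectation ℓ hQ (X i * p)
      = ∑ j, (if i = j then 1 else 0) * gaussianExpectation ℓ hQ (X j * p) := by simp
    _ = _ := by
      refine Finset.sum_congr rfl fun j _ => ?_
      rw [← hinv, Finset.sum_mul]
      exact Finset.sum_congr rfl fun k _ => by ring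

/-- The matrix of affine forms `m + ∑ₖ Aₖ Xₖ` in the variables `Xₖ`, where `Aₖ = A · · k`. -/
noncomputable def affineMatrix {P : Type*} (m : P → P → ℂ) (A : P → P → K → ℂ) :
    Matrix P P (MvPolynomial K ℂ) :=
  of fun p q => C (m p q) + ∑ k, A p q k • X k

theorem realEval_det_affineMatrix {P : Type*} [Fintype P] [DecidableEq P] (m : P → P → ℂ)
    (A : P → P → K → ℂ) (x : K → ℝ) :
    realEval x (affineMatrix m A).det = (of fun p q => m p q + ∑ k, A p q k * x k).det := by
  rw [AlgHom.map_det]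
  congr 1
  ext p q
  simp only [AlgHom.mapMatrix_apply, map_apply, affineMatrix, of_apply, map_add, realEval_C,
    map_sum, map_smul, realEval_X, smul_eq_mul]

variable [DecidableEq K]

theorem isWickMatrix_affineMatrix {P : Type*} (hQ : Q.PosDef) (m : P → P → ℂ) (A : P → P → K → ℂ) :
    IsWickMatrix (gaussianExpectation ℓ hQ) (affineMatrix m A)
      (fun p q => m p q + ∑ i, A p q i * ∑ k, (Q⁻¹ i k / 2 : ℂ) * ℓ k)
      (fun p q r s => ∑ i, ∑ k, A p q i * (Q⁻¹ i k / 2 : ℂ) * A r s k) := by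
  intro p q
  have happly (f : MvPolynomial K ℂ) :
      (∑ i, ∑ k, (A p q i * (Q⁻¹ i k / 2 : ℂ)) • pderiv k :
        Derivation ℂ (MvPolynomial K ℂ) (MvPolynomial K ℂ)) f =
      ∑ i, ∑ k, (A p q i * (Q⁻¹ i k / 2 : ℂ)) • pderiv k f := by
    simp only [← Derivation.coeFnAddMonoidHom_apply, map_sum, Finset.sum_apply]
    rfl
  refine ⟨∑ i, ∑ k, (A p q i * (Q⁻¹ i k / 2 : ℂ)) • pderiv k, fun f => ?_, fun r s => ?_⟩
  · simp only [affineMatrix, of_apply, add_mul, Finset.sum_mul, smul_mul_assoc, C_mul', map_add,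
      map_sum, map_smul, smul_eq_mul, gaussianExpectation_X_mul, happly, mul_add,
      Finset.sum_add_distrib, Finset.mul_sum, mul_assoc, add_assoc]
  · rw [happly]
    have hderiv (k : K) : pderiv k (affineMatrix m A r s) = A r s k • 1 := by
      rw [affineMatrix, of_apply, map_add, pderiv_C, zero_add, map_sum, Finset.sum_eq_single k]
      · rw [Derivation.map_smul, pderiv_X_self]
      · intro j _ hj
        rw [Derivation.map_smul, pderiv_X_of_ne hj, smul_zero]
      · simp
    simp only [hderiv, smul_smul, ← Finset.sum_smul, Algebra.algebraMap_eq_smul_one]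

end GaussianIntegral

section LaplacianResolvent

open Matrix SimpleGraph

variable {V : Type*} [Fintype V] [DecidableEq V] (G : SimpleGraph V) [DecidableRel G.Adj] {c : ℝ}

theorem posDef_smul_lapMatrix_add_one (hc : 0 ≤ c) : (c • G.lapMatrix ℝ + 1).PosDef :=
  PosDef.posSemidef_add ((G.posSemidef_lapMatrix ℝ).smul hc) PosDef.one

theorem sum_inv_smul_lapMatrix_add_one (hc : 0 ≤ c) (i : V) :
    ∑ k, (c • G.lapMatrix ℝ + 1)⁻¹ i k = 1 := by
  have hunit := (posDef_smul_lapMatrix_add_one G hc).det_pos.ne'.isUnit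
  have hone : (c • G.lapMatrix ℝ + 1) *ᵥ (fun _ => 1) = fun _ => 1 := by
    rw [add_mulVec, smul_mulVec, lapMatrix_mulVec_const_eq_zero, smul_zero, zero_add, one_mulVec]
  have hinv : (c • G.lapMatrix ℝ + 1)⁻¹ *ᵥ (fun _ => 1) = fun _ => 1 := by
    conv_lhs => rw [← hone]
    rw [mulVec_mulVec, nonsing_inv_mul _ hunit, one_mulVec]
  simpa [mulVec, dotProduct] using congrFun hinv i

variable {G} in
theorem nonneg_of_smul_lapMatrix_add_one_mulVec_nonneg (hc : 0 ≤ c) {x : V → ℝ}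
    (hx : ∀ i, 0 ≤ ((c • G.lapMatrix ℝ + 1) *ᵥ x) i) (i : V) : 0 ≤ x i := by
  obtain ⟨j, -, hj⟩ := Finset.exists_min_image Finset.univ x ⟨i, Finset.mem_univ i⟩
  have hnbrs : G.degree j * x j ≤ ∑ u ∈ G.neighborFinset j, x u := by
    rw [← nsmul_eq_mul, ← card_neighborFinset_eq_degree]
    exact Finset.card_nsmul_le_sum _ _ _ fun u _ => hj u (Finset.mem_univ u)
  have hxj := hx j
  rw [add_mulVec, one_mulVec, smul_mulVec, Pi.add_apply, Pi.smul_apply, smul_eq_mul,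
    lapMatrix_mulVec_apply] at hxj
  have hle := mul_nonneg hc (sub_nonneg.mpr hnbrs)
  linarith [hj i (Finset.mem_univ i)]

variable {G} in
theorem smul_lapMatrix_add_one_inv_pos (hG : G.Preconnected) (hc : 0 < c) (i k : V) :
    0 < (c • G.lapMatrix ℝ + 1)⁻¹ i k := by
  set x : V → ℝ := fun j => (c • G.lapMatrix ℝ + 1)⁻¹ j k
  have hunit := (posDef_smul_lapMatrix_add_one G hc.le).det_pos.ne'.isUnit
  have hsolve : (c • G.lapMatrix ℝ + 1) *ᵥ x = fun j => (1 : Matrix V V ℝ) j k :=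
    funext fun j => congrFun₂ (mul_nonsing_inv _ hunit) j k
  have hdelta (j : V) : 0 ≤ (1 : Matrix V V ℝ) j k := by
    rw [one_apply]
    positivity
  have hnonneg : ∀ j, 0 ≤ x j :=
    nonneg_of_smul_lapMatrix_add_one_mulVec_nonneg hc.le fun j => by
      rw [hsolve]
      exact hdelta j
  have hbalance {j : V} (hj : x j = 0) :
      c * ∑ u ∈ G.neighborFinset j, x u = -(1 : Matrix V V ℝ) j k := by
    rw [← congrFun hsolve j, add_mulVec, one_mulVec, smul_mulVec, Pi.add_apply, Pi.smul_apply,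
      smul_eq_mul, lapMatrix_mulVec_apply, hj]
    ring
  have hspread {j u : V} (hadj : G.Adj j u) (hj : x j = 0) : x u = 0 := by
    have hsum : ∑ u ∈ G.neighborFinset j, x u = 0 := by
      refine le_antisymm ?_ (Finset.sum_nonneg fun u _ => hnonneg u)
      exact nonpos_of_mul_nonpos_right ((hbalance hj).trans_le (neg_nonpos.mpr (hdelta j))) hc
    exact (Finset.sum_eq_zero_iff_of_nonneg fun u _ => hnonneg u).mp hsum u (by simpa using hadj)
  have hreach {j l : V} (walk : G.Walk j l) (hj : x j = 0) : x l = 0 := by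
    induction walk with
    | nil => exact hj
    | cons hadj _ ih => exact ih (hspread hadj hj)
  refine (hnonneg i).lt_of_ne' fun hi => ?_
  have hk : x k = 0 := (hG i k).elim fun walk => hreach walk hi
  have hneg := hbalance hk
  rw [one_apply_eq] at hneg
  have : 0 ≤ c * ∑ u ∈ G.neighborFinset k, x u :=
    mul_nonneg hc.le (Finset.sum_nonneg fun u _ => hnonneg u)
  linarith

end LaplacianResolvent

section BandCovariance

open Matrix SimpleGraph

instance (m : ℕ) : DecidableRel (pathGraph m).Adj := fun _ _ =>
  decidable_of_iff' _ pathGraph_adj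

theorem sum_pathGraph_adj {m : ℕ} (i : Fin (m + 1)) (f : Fin (m + 1) → ℝ) :
    ∑ j, (if (pathGraph (m + 1)).Adj i j then f j else 0) =
      ∑ j : Fin (m + 1), (if (i : ℕ) + 1 = j then f j else 0) +
        ∑ j : Fin (m + 1), (if (j : ℕ) + 1 = i then f j else 0) := by
  rw [← Finset.sum_add_distrib]
  refine Finset.sum_congr rfl fun j _ => ?_
  simp only [pathGraph_adj]
  grind

theorem negLap_eq_lapMatrix (m : ℕ) : negLap (m + 1) = (pathGraph (m + 1)).lapMatrix ℝ := by
  ext i j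
  rw [lapMatrix, degMatrix, Matrix.sub_apply, diagonal_apply, adjMatrix_apply, negLap, of_apply]
  by_cases hij : i = j
  · subst hij
    have hup : ∑ j : Fin (m + 1), (if (i : ℕ) + 1 = j then (1 : ℝ) else 0) =
        1 - if (i : ℕ) = m then 1 else 0 := by
      rw [Fin.sum_univ_eq_sum_range (fun j => if (i : ℕ) + 1 = j then (1 : ℝ) else 0) (m + 1),
        Finset.sum_ite_eq]
      grind
    have hdown : ∑ j : Fin (m + 1), (if (j : ℕ) + 1 = i then (1 : ℝ) else 0) =
        1 - if (i : ℕ) = 0 then 1 else 0 := by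
      rw [Fin.sum_univ_eq_sum_range (fun j => if j + 1 = (i : ℕ) then (1 : ℝ) else 0) (m + 1)]
      rcases h : (i : ℕ) with _ | k
      · simp
      · have : k < m + 1 := by omega
        simp [this]
    rw [degree_eq_sum_if_adj, sum_pathGraph_adj, hup, hdown]
    simp
    ring
  · simp only [if_neg hij, pathGraph_adj, zero_sub]
    split_ifs <;> simp

theorem dotProduct_lapMatrix_pathGraph_mulVec {m : ℕ} (x : Fin (m + 1) → ℝ) :
    x ⬝ᵥ (pathGraph (m + 1)).lapMatrix ℝ *ᵥ x = ∑ k : Fin m, (x k.succ - x k.castSucc) ^ 2 := by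
  have hup : ∑ i : Fin (m + 1), ∑ j : Fin (m + 1),
      (if (i : ℕ) + 1 = j then (x i - x j) ^ 2 else 0) =
      ∑ k : Fin m, (x k.succ - x k.castSucc) ^ 2 := by
    rw [Fin.sum_univ_castSucc]
    have hlast : ∑ j : Fin (m + 1),
        (if (Fin.last m : ℕ) + 1 = j then (x (Fin.last m) - x j) ^ 2 else 0) = 0 :=
      Finset.sum_eq_zero fun j _ => if_neg (by grind)
    rw [hlast, add_zero]
    refine Finset.sum_congr rfl fun k _ => ?_
    rw [Finset.sum_eq_single k.succ]
    · simp [sub_sq_comm]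
    · intro j _ hj
      exact if_neg fun h => hj (Fin.ext h.symm)
    · simp
  have hdown : ∑ i : Fin (m + 1), ∑ j : Fin (m + 1),
      (if (j : ℕ) + 1 = i then (x i - x j) ^ 2 else 0) =
      ∑ k : Fin m, (x k.succ - x k.castSucc) ^ 2 := by
    rw [Finset.sum_comm, ← hup]
    simp only [sub_sq_comm]
  rw [← toLinearMap₂'_apply', lapMatrix_toLinearMap₂']
  simp only [sum_pathGraph_adj, Finset.sum_add_distrib, hup, hdown, add_self_div_two]

variable (n : ℕ) (W : ℝ)

/-- The inverse covariance matrix `−W²Δ + 1` of the band ensemble. -/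
noncomputable def precision : Matrix (Fin (2 * n + 1)) (Fin (2 * n + 1)) ℝ :=
  W ^ 2 • negLap (2 * n + 1) + 1

theorem precision_eq_lapMatrix :
    precision n W = W ^ 2 • (pathGraph (2 * n + 1)).lapMatrix ℝ + 1 := by
  rw [precision, negLap_eq_lapMatrix]

theorem posDef_precision : (precision n W).PosDef := by
  rw [precision_eq_lapMatrix]
  exact posDef_smul_lapMatrix_add_one _ (sq_nonneg W)

theorem inv_precision : (precision n W)⁻¹ = Jmat n W :=
  rfl

theorem dotProduct_precision_mulVec (x : Fin (2 * n + 1) → ℝ) :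
    x ⬝ᵥ precision n W *ᵥ x =
      W ^ 2 * ∑ k : Fin (2 * n), (x k.succ - x k.castSucc) ^ 2 + ∑ i, x i ^ 2 := by
  rw [precision_eq_lapMatrix, add_mulVec, smul_mulVec, one_mulVec, dotProduct_add, dotProduct_smul,
    dotProduct_lapMatrix_pathGraph_mulVec, smul_eq_mul]
  simp only [dotProduct, sq]

theorem isSymm_Jmat : (Jmat n W).IsSymm :=
  (conjTranspose_eq_transpose_of_trivial _).symm.trans (posDef_precision n W).inv.isHermitian

theorem sum_Jmat (i : Fin (2 * n + 1)) : ∑ k, Jmat n W i k = 1 := by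
  rw [← inv_precision, precision_eq_lapMatrix]
  exact sum_inv_smul_lapMatrix_add_one _ (sq_nonneg W) i

variable {W} in
theorem Jmat_pos (hW : 0 < W) (i k : Fin (2 * n + 1)) : 0 < Jmat n W i k := by
  rw [← inv_precision, precision_eq_lapMatrix]
  exact smul_lapMatrix_add_one_inv_pos (pathGraph_preconnected _) (pow_pos hW 2) i k

end BandCovariance

section IndependentGaussians

open MvPolynomial Matrix

variable {K : Type*} [DecidableEq K] {v : K → ℝ}

theorem posDef_diagonal_two_mul_inv (hv : ∀ k, 0 < v k) :
    (diagonal fun k => (2 * v k)⁻¹).PosDef :=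
  PosDef.diagonal fun k => inv_pos.mpr (mul_pos two_pos (hv k))

variable [Fintype K]

theorem inv_diagonal_two_mul_inv (hv : ∀ k, 0 < v k) :
    (diagonal fun k => (2 * v k)⁻¹)⁻¹ = diagonal fun k => 2 * v k := by
  refine inv_eq_right_inv ?_
  rw [diagonal_mul_diagonal, ← diagonal_one]
  exact congrArg diagonal (funext fun k => inv_mul_cancel₀ (mul_pos two_pos (hv k)).ne')

/-- The expectation of polynomials in independent centred real Gaussians of variances `v`. -/
noncomputable def independentExpectation (hv : ∀ k, 0 < v k) : MvPolynomial K ℂ →ₗ[ℂ] ℂ :=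
  gaussianExpectation 0 (posDef_diagonal_two_mul_inv hv)

theorem independentExpectation_apply (hv : ∀ k, 0 < v k) (p : MvPolynomial K ℂ) :
    independentExpectation hv p = ∫ x, realEval x p *
      (∏ k, (Real.sqrt (2 * Real.pi * v k))⁻¹ * Real.exp (-x k ^ 2 / (2 * v k)) : ℝ) := by
  have hmass : ∫ x, gaussianWeight (diagonal fun k => (2 * v k)⁻¹) 0 x =
      ((∏ k, Real.sqrt (2 * Real.pi * v k) : ℝ) : ℂ) := by
    rw [integral_gaussianWeight 0 (posDef_diagonal_two_mul_inv hv), det_diagonal,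
      ← Real.sqrt_prod _ fun k _ => by have := hv k; positivity]
    simp only [Pi.zero_apply, zero_mul, mul_zero, Finset.sum_const_zero, zero_div,
      Complex.exp_zero, mul_one]
    congr 2
    rw [← Finset.card_univ, ← Finset.prod_const, Finset.prod_inv_distrib, div_inv_eq_mul,
      ← Finset.prod_mul_distrib]
    exact Finset.prod_congr rfl fun k _ => by ring
  have hweight (x : K → ℝ) : gaussianWeight (diagonal fun k => (2 * v k)⁻¹) 0 x =
      ((∏ k, Real.exp (-x k ^ 2 / (2 * v k)) : ℝ) : ℂ) := by
    rw [gaussianWeight, realEval_gaussianExponent, ← Real.exp_sum]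
    simp only [Pi.zero_apply, zero_mul, Finset.sum_const_zero, add_zero, dotProduct,
      mulVec_diagonal, Complex.ofReal_exp, ← Complex.ofReal_neg, ← Finset.sum_neg_distrib]
    congr 3 with k
    ring
  rw [independentExpectation, gaussianExpectation_apply, hmass, div_eq_mul_inv,
    ← integral_mul_const]
  refine integral_congr_ae (.of_forall fun x => ?_)
  simp only [hweight, Finset.prod_mul_distrib, Finset.prod_inv_distrib]
  push_cast
  ring

theorem independentExpectation_one (hv : ∀ k, 0 < v k) : independentExpectation hv 1 = 1 :=
  gaussianExpectation_one 0 (posDef_diagonal_two_mul_inv hv)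

theorem isWickMatrix_independentExpectation {P : Type*} (hv : ∀ k, 0 < v k) (m : P → P → ℂ)
    (A : P → P → K → ℂ) :
    IsWickMatrix (independentExpectation hv) (affineMatrix m A) m
      (fun p q r s => ∑ k, A p q k * v k * A r s k) := by
  refine (isWickMatrix_affineMatrix 0 (posDef_diagonal_two_mul_inv hv) m A).congr
    (fun p q => ?_) fun p q r s => Finset.sum_congr rfl fun i _ => ?_
  · simp only [Pi.zero_apply, mul_zero, Finset.sum_const_zero, add_zero]
  · rw [inv_diagonal_two_mul_inv hv, Finset.sum_eq_single i]
    · rw [diagonal_apply_eq, Complex.ofReal_mul, Complex.ofReal_ofNat,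
        mul_div_cancel_left₀ _ two_ne_zero]
    · intro k _ hk
      rw [diagonal_apply_ne _ hk.symm]
      simp
    · simp

end IndependentGaussians

section HermitianGaussian

variable {ι : Type*} [LinearOrder ι]

/-- The positions strictly above the diagonal. -/
abbrev UpperPair (ι : Type*) [LinearOrder ι] := {q : ι × ι // q.1 < q.2}

/-- The real coordinates of a Hermitian matrix: its diagonal entries, then the real parts, then the
imaginary parts of the entries above the diagonal. -/
abbrev HermitianCoord (ι : Type*) [LinearOrder ι] := ι ⊕ (UpperPair ι ⊕ UpperPair ι)

/-- The entry `(i, j)` of a Hermitian matrix as a linear form in its real coordinates. -/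
def hermitianForm (i j : ι) : HermitianCoord ι → ℂ
  | .inl k => if k = i ∧ k = j then 1 else 0
  | .inr (.inl q) => (if q.1 = (i, j) then 1 else 0) + (if q.1 = (j, i) then 1 else 0)
  | .inr (.inr q) =>
      Complex.I * ((if q.1 = (i, j) then 1 else 0) - (if q.1 = (j, i) then 1 else 0))

/-- The variances of the real coordinates of a complex Hermitian Gaussian matrix with variance
profile `J`. -/
noncomputable def hermitianVariance (J : Matrix ι ι ℝ) : HermitianCoord ι → ℝ
  | .inl i => J i i
  | .inr (.inl q) => J q.1.1 q.1.2 / 2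
  | .inr (.inr q) => J q.1.1 q.1.2 / 2

theorem hermitianVariance_pos {J : Matrix ι ι ℝ} (hJ : ∀ i j, 0 < J i j) :
    ∀ k, 0 < hermitianVariance J k
  | .inl i => hJ i i
  | .inr (.inl q) => half_pos (hJ q.1.1 q.1.2)
  | .inr (.inr q) => half_pos (hJ q.1.1 q.1.2)

variable [Fintype ι]

theorem sum_upperPair_ite_eq (p : ι × ι) (f : ι × ι → ℂ) :
    ∑ q : UpperPair ι, (if q.1 = p then f q.1 else 0) = if p.1 < p.2 then f p else 0 := by
  by_cases hp : p.1 < p.2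
  · rw [if_pos hp, Finset.sum_eq_single ⟨p, hp⟩]
    · simp
    · exact fun q _ hq => if_neg fun h => hq (Subtype.ext h)
    · simp
  · rw [if_neg hp]
    exact Finset.sum_eq_zero fun q _ => if_neg fun (h : q.1 = p) => hp (h ▸ q.2)

theorem sum_hermitianForm_mul_hermitianForm {J : Matrix ι ι ℝ} (hJ : J.IsSymm) (i j r s : ι) :
    ∑ k, hermitianForm i j k * hermitianVariance J k * hermitianForm r s k =
      if i = s ∧ j = r then (J i j : ℂ) else 0 := by
  have hdiag : ∑ k, hermitianForm i j (.inl k) * hermitianVariance J (.inl k) *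
      hermitianForm r s (.inl k) = if i = j ∧ i = s ∧ j = r then (J i j : ℂ) else 0 := by
    rw [Finset.sum_eq_single i]
    · simp only [hermitianForm, hermitianVariance]
      grind
    · intro k _ hk
      simp [hermitianForm, hk]
    · simp
  have hpair (q : UpperPair ι) :
      hermitianForm i j (.inr (.inl q)) * hermitianVariance J (.inr (.inl q)) *
        hermitianForm r s (.inr (.inl q)) +
      hermitianForm i j (.inr (.inr q)) * hermitianVariance J (.inr (.inr q)) *
        hermitianForm r s (.inr (.inr q)) =
      (if q.1 = (i, j) then (if i = s ∧ j = r then (J q.1.1 q.1.2 : ℂ) else 0) else 0) +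
      (if q.1 = (j, i) then (if i = s ∧ j = r then (J q.1.1 q.1.2 : ℂ) else 0) else 0) := by
    let δ (p : ι × ι) : ℂ := if q.1 = p then 1 else 0
    have hδ (p p' : ι × ι) : δ p * δ p' * J q.1.1 q.1.2 =
        if q.1 = p then (if p = p' then (J q.1.1 q.1.2 : ℂ) else 0) else 0 := by
      grind
    have hij := hδ (i, j) (s, r)
    have hji := hδ (j, i) (r, s)
    simp only [Prod.mk.injEq, and_comm (a := j = r)] at hij hji
    simp only [hermitianForm, hermitianVariance, Complex.ofReal_div, Complex.ofReal_ofNat]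
    linear_combination hij + hji + (J q.1.1 q.1.2 : ℂ) / 2 * (δ (i, j) - δ (j, i)) *
      (δ (r, s) - δ (s, r)) * Complex.I_sq
  rw [Fintype.sum_sum_type, Fintype.sum_sum_type, ← Finset.sum_add_distrib, hdiag]
  simp only [hpair, Finset.sum_add_distrib]
  rw [sum_upperPair_ite_eq (i, j) fun p => if i = s ∧ j = r then (J p.1 p.2 : ℂ) else 0,
    sum_upperPair_ite_eq (j, i) fun p => if i = s ∧ j = r then (J p.1 p.2 : ℂ) else 0, hJ.apply i j]
  by_cases hsr : i = s ∧ j = r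
  · obtain ⟨rfl, rfl⟩ := hsr
    rcases lt_trichotomy i j with h | rfl | h
    · simp [h, h.ne, h.not_gt]
    · simp
    · simp [h, h.ne', h.not_gt]
  · simp [hsr]

/-- The real coordinates of a Hermitian matrix, split into its diagonal and its complex entries
above the diagonal. -/
def hermitianCoordEquiv (ι : Type*) [LinearOrder ι] :
    (HermitianCoord ι → ℝ) ≃ᵐ (ι → ℝ) × (UpperPair ι → ℝ × ℝ) :=
  (MeasurableEquiv.sumPiEquivProdPi fun _ => ℝ).trans
    (MeasurableEquiv.prodCongr (.refl _) ((MeasurableEquiv.sumPiEquivProdPi fun _ => ℝ).trans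
      (MeasurableEquiv.arrowProdEquivProdArrow ℝ ℝ (UpperPair ι)).symm))

theorem measurePreserving_hermitianCoordEquiv : MeasurePreserving (hermitianCoordEquiv ι) := by
  have hpairs := (volume_measurePreserving_arrowProdEquivProdArrow ℝ ℝ (UpperPair ι)).symm.comp
    (volume_measurePreserving_sumPiEquivProdPi fun _ : UpperPair ι ⊕ UpperPair ι => ℝ)
  exact ((MeasurePreserving.id (volume : Measure (ι → ℝ))).prod hpairs).comp
    (volume_measurePreserving_sumPiEquivProdPi fun _ : HermitianCoord ι => ℝ)

end HermitianGaussian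

section BandEnsemble

open MvPolynomial Matrix

variable {n : ℕ} {W : ℝ}

theorem sum_hermitianForm_mul (x : HermitianCoord (Fin (2 * n + 1)) → ℝ)
    (i j : Fin (2 * n + 1)) :
    ∑ k, hermitianForm i j k * x k = bandH n (fun i => x (.inl i))
      (fun q => (x (.inr (.inl q)), x (.inr (.inr q)))) i j := by
  have hdiag : ∑ k : Fin (2 * n + 1), hermitianForm i j (.inl k) * x (.inl k) =
      if i = j then (x (.inl i) : ℂ) else 0 := by
    rw [Finset.sum_eq_single i]
    · simp [hermitianForm]
    · intro k _ hk
      simp [hermitianForm, hk]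
    · simp
  have hsingle {p : Fin (2 * n + 1) × Fin (2 * n + 1)} (y : UpperPair (Fin (2 * n + 1)) → ℝ) :
      ∑ q, (if q.1 = p then 1 else 0) * (y q : ℂ) =
        if h : p.1 < p.2 then (y ⟨p, h⟩ : ℂ) else 0 := by
    split_ifs with h
    · rw [Finset.sum_eq_single ⟨p, h⟩]
      · simp
      · intro q _ hq
        rw [if_neg fun hqp => hq (Subtype.ext hqp), zero_mul]
      · simp
    · exact Finset.sum_eq_zero fun q _ => by
        rw [if_neg fun (hqp : q.1 = p) => h (hqp ▸ q.2), zero_mul]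
  rw [Fintype.sum_sum_type, Fintype.sum_sum_type, hdiag]
  simp only [hermitianForm, add_mul, sub_mul, mul_assoc, ← Finset.mul_sum, Finset.sum_add_distrib,
    Finset.sum_sub_distrib, hsingle, bandH, of_apply]
  rcases lt_trichotomy i j with h | rfl | h
  · apply Complex.ext <;> simp [h, h.ne, h.not_gt]
  · simp
  · apply Complex.ext <;> simp [h, h.ne', h.not_gt]

theorem bandDens_eq_prod (hW : 0 < W) (x : HermitianCoord (Fin (2 * n + 1)) → ℝ) :
    bandDens n W (fun i => x (.inl i)) (fun q => (x (.inr (.inl q)), x (.inr (.inr q)))) =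
      ∏ k, (Real.sqrt (2 * Real.pi * hermitianVariance (Jmat n W) k))⁻¹ *
        Real.exp (-x k ^ 2 / (2 * hermitianVariance (Jmat n W) k)) := by
  rw [bandDens, Fintype.prod_sum_type, Fintype.prod_sum_type, ← Finset.prod_mul_distrib]
  congr 1
  refine Finset.prod_congr rfl fun q _ => ?_
  have hJ := Jmat_pos n hW q.1.1 q.1.2
  have hpi : 2 * Real.pi * (Jmat n W q.1.1 q.1.2 / 2) = Real.pi * Jmat n W q.1.1 q.1.2 := by ring
  simp only [hermitianVariance]
  rw [hpi, mul_mul_mul_comm, ← Real.exp_add, ← mul_inv, Real.mul_self_sqrt (by positivity)]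
  congr 2
  ring

/-- The block-diagonal matrix with blocks `λₐ − H`, as a matrix of affine forms in the real
coordinates of `H`. -/
noncomputable def resolventBlocks (n : ℕ) (l : Fin 2 → ℂ) :
    Matrix (Fin (2 * n + 1) × Fin 2) (Fin (2 * n + 1) × Fin 2)
      (MvPolynomial (HermitianCoord (Fin (2 * n + 1))) ℂ) :=
  affineMatrix (fun p q => if p = q then l p.2 else 0)
    (fun p q k => if p.2 = q.2 then -hermitianForm p.1 q.1 k else 0)

theorem realEval_det_resolventBlocks (l : Fin 2 → ℂ)
    (x : HermitianCoord (Fin (2 * n + 1)) → ℝ) :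
    realEval x (resolventBlocks n l).det =
      ∏ a, (l a • 1 - bandH n (fun i => x (.inl i))
        (fun q => (x (.inr (.inl q)), x (.inr (.inr q))))).det := by
  rw [resolventBlocks, realEval_det_affineMatrix, ← det_blockDiagonal]
  congr 1
  ext ⟨i, a⟩ ⟨j, b⟩
  rw [of_apply, blockDiagonal_apply]
  by_cases hab : a = b
  · subst hab
    simp [← sum_hermitianForm_mul, one_apply, sub_eq_add_neg]
  · simp [hab]

theorem F2_eq_independentExpectation (hW : 0 < W) (l₁ l₂ : ℝ) :
    F2 n W l₁ l₂ = independentExpectation (hermitianVariance_pos (Jmat_pos n hW))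
      (resolventBlocks n ![(l₁ : ℂ), (l₂ : ℂ)]).det := by
  rw [F2, independentExpectation_apply, ← measurePreserving_hermitianCoordEquiv.integral_comp']
  refine integral_congr_ae (.of_forall fun x => ?_)
  dsimp only
  rw [realEval_det_resolventBlocks, ← bandDens_eq_prod hW, Fin.prod_univ_two, mul_assoc, mul_comm]
  rfl

theorem isWickMatrix_resolventBlocks (hW : 0 < W) (l : Fin 2 → ℂ) :
    IsWickMatrix (independentExpectation (hermitianVariance_pos (Jmat_pos n hW)))
      (resolventBlocks n l) (fun p q => if p = q then l p.2 else 0)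
      (fun p q r s => if (p.2 = q.2 ∧ r.2 = s.2) ∧ p.1 = s.1 ∧ q.1 = r.1 then
        (Jmat n W p.1 q.1 : ℂ) else 0) := by
  refine (isWickMatrix_independentExpectation _ _ _).congr (fun _ _ => rfl) fun p q r s => ?_
  have hcov := sum_hermitianForm_mul_hermitianForm (isSymm_Jmat n W) p.1 q.1 r.1 s.1
  by_cases hpq : p.2 = q.2 <;> by_cases hrs : r.2 = s.2 <;> simp [hpq, hrs, hcov]

end BandEnsemble

section DualField

open MvPolynomial Matrix Kronecker

/-- The identity followed by the three Pauli matrices, a real basis of the Hermitian `2 × 2`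
matrices. -/
noncomputable def pauli : Fin 4 → Matrix (Fin 2) (Fin 2) ℂ :=
  ![!![1, 0; 0, 1], !![0, 1; 1, 0], !![0, -Complex.I; Complex.I, 0], !![1, 0; 0, -1]]

theorem sum_pauli_mul_pauli (a b c d : Fin 2) :
    ∑ k, pauli k a b * pauli k c d = if a = d ∧ b = c then 2 else 0 := by
  rw [Fin.sum_univ_four]
  fin_cases a <;> fin_cases b <;> fin_cases c <;> fin_cases d <;> simp [pauli] <;> norm_num

/-- The Hermitian `2 × 2` matrix with Pauli coordinates `y`. -/
noncomputable def pauliSum (y : Fin 4 → ℝ) : Matrix (Fin 2) (Fin 2) ℂ :=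
  ∑ c, (y c : ℂ) • pauli c

/-- The coefficients of the linear form `-i Tr (diag s · X)` in the Pauli coordinates of `X`. -/
noncomputable def pauliSource (s : Fin 2 → ℂ) : Fin 4 → ℂ :=
  ![-Complex.I * (s 0 + s 1), 0, 0, -Complex.I * (s 0 - s 1)]

theorem sum_pauli_mul_pauliSource (s : Fin 2 → ℂ) (a b : Fin 2) :
    ∑ c, Complex.I * pauli c a b * (pauliSource s c / 2) = if a = b then s a else 0 := by
  rw [Fin.sum_univ_four]
  fin_cases a <;> fin_cases b <;> simp [pauli, pauliSource]
  · linear_combination (-s 0) * Complex.I_sq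
  · linear_combination (-s 1) * Complex.I_sq

theorem sum_pauliSource_sq (s : Fin 2 → ℂ) :
    ∑ c, pauliSource s c ^ 2 = -2 * (s 0 ^ 2 + s 1 ^ 2) := by
  rw [Fin.sum_univ_four]
  simp only [pauliSource, cons_val, mul_pow, neg_sq, Complex.I_sq]
  ring

variable (n : ℕ) (W : ℝ)

/-- The quadratic form of the dual field: each of the four Pauli coordinates of the chain
`X_{-n}, …, X_n` has precision `J⁻¹`. -/
noncomputable def dualPrecision :
    Matrix (Fin (2 * n + 1) × Fin 4) (Fin (2 * n + 1) × Fin 4) ℝ :=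
  precision n W ⊗ₖ 1

theorem posDef_dualPrecision : (dualPrecision n W).PosDef :=
  (posDef_precision n W).kronecker PosDef.one

theorem inv_dualPrecision_apply (p q : Fin (2 * n + 1) × Fin 4) :
    ((dualPrecision n W)⁻¹ p q : ℂ) = if p.2 = q.2 then (Jmat n W p.1 q.1 : ℂ) else 0 := by
  rw [dualPrecision, inv_kronecker, inv_precision, inv_one, kroneckerMap_apply, one_apply]
  split_ifs <;> simp

theorem dotProduct_dualPrecision_mulVec (x : Fin (2 * n + 1) × Fin 4 → ℝ) :
    x ⬝ᵥ dualPrecision n W *ᵥ x =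
      ∑ c, (fun j => x (j, c)) ⬝ᵥ precision n W *ᵥ (fun j => x (j, c)) := by
  simp only [dotProduct, mulVec, dualPrecision, Fintype.sum_prod_type, kroneckerMap_apply,
    one_apply, mul_ite, mul_one, mul_zero, ite_mul, zero_mul, Finset.sum_ite_eq, Finset.mem_univ,
    if_true]
  exact Finset.sum_comm

/-- The linear term of the dual field: the same source `diag s` at every site. -/
noncomputable def dualSource (s : Fin 2 → ℂ) : Fin (2 * n + 1) × Fin 4 → ℂ :=
  fun k => pauliSource s k.2

theorem sum_ofReal_Jmat (i : Fin (2 * n + 1)) : ∑ k, (Jmat n W i k : ℂ) = 1 :=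
  mod_cast sum_Jmat n W i

theorem integral_gaussianWeight_dualPrecision (s : Fin 2 → ℂ) :
    ∫ x, gaussianWeight (dualPrecision n W) (dualSource n s) x =
      (Real.pi : ℂ) ^ (2 * (2 * n + 1)) * ((Jmat n W).det : ℂ) ^ 2 *
        Complex.exp (-(2 * n + 1) * (s 0 ^ 2 + s 1 ^ 2) / 2) := by
  have hJ : (Jmat n W).det = ((precision n W).det)⁻¹ := by
    rw [← inv_precision, det_nonsing_inv, Ring.inverse_eq_inv']
  have hsqrt : Real.sqrt (Real.pi ^ Fintype.card (Fin (2 * n + 1) × Fin 4) /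
      (dualPrecision n W).det) = Real.pi ^ (2 * (2 * n + 1)) * (Jmat n W).det ^ 2 := by
    have hdet := (posDef_precision n W).det_pos
    rw [← Real.sqrt_sq (by positivity : 0 ≤ Real.pi ^ (2 * (2 * n + 1)) * (Jmat n W).det ^ 2), hJ,
      dualPrecision, det_kronecker, det_one]
    congr 1
    simp only [Fintype.card_prod, Fintype.card_fin]
    field_simp
    ring
  have hexp : ∑ p, ∑ q, dualSource n s p * ((dualPrecision n W)⁻¹ p q : ℂ) * dualSource n s q =
      (2 * n + 1) * ∑ c, pauliSource s c ^ 2 := by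
    simp only [inv_dualPrecision_apply, dualSource, Fintype.sum_prod_type]
    simp only [mul_ite, ite_mul, mul_zero, zero_mul, Finset.sum_ite_eq, Finset.mem_univ, if_true,
      mul_right_comm _ _ (pauliSource _ _), ← sq]
    simp_rw [Finset.sum_comm (γ := Fin (2 * n + 1)) (α := Fin 4), ← Finset.mul_sum, sum_ofReal_Jmat]
    simp [Finset.mul_sum, mul_comm]
  rw [integral_gaussianWeight _ (posDef_dualPrecision n W), hsqrt, hexp, sum_pauliSource_sq]
  push_cast
  congr 2
  ring

/-- The block-diagonal matrix with blocks `t + i X_j`, as a matrix of affine forms in the Pauli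
coordinates of the dual field. -/
noncomputable def dualBlocks (t : ℂ) :
    Matrix (Fin (2 * n + 1) × Fin 2) (Fin (2 * n + 1) × Fin 2)
      (MvPolynomial (Fin (2 * n + 1) × Fin 4) ℂ) :=
  affineMatrix (fun p q => if p = q then t else 0)
    (fun p q k => if p.1 = q.1 ∧ k.1 = p.1 then Complex.I * pauli k.2 p.2 q.2 else 0)

theorem realEval_det_dualBlocks (t : ℂ) (x : Fin (2 * n + 1) × Fin 4 → ℝ) :
    realEval x (dualBlocks n t).det =
      ∏ j, (t • 1 + Complex.I • pauliSum fun c => x (j, c)).det := by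
  rw [dualBlocks, realEval_det_affineMatrix, ← det_blockDiagonal,
    ← det_submatrix_equiv_self (Equiv.prodComm _ _)]
  congr 1
  ext ⟨a, i⟩ ⟨b, j⟩
  by_cases hij : i = j
  · subst hij
    simp [blockDiagonal_apply, pauliSum, Fintype.sum_prod_type, one_apply, Matrix.sum_apply,
      Finset.mul_sum, mul_comm, mul_left_comm]
  · simp [blockDiagonal_apply, hij]

theorem isWickMatrix_dualBlocks (t : ℂ) (s : Fin 2 → ℂ) :
    IsWickMatrix (gaussianExpectation (dualSource n s) (posDef_dualPrecision n W))
      (dualBlocks n t) (fun p q => if p = q then t + s p.2 else 0)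
      (fun p q r s => if (p.1 = q.1 ∧ r.1 = s.1) ∧ p.2 = s.2 ∧ q.2 = r.2 then
        -(Jmat n W p.1 r.1 : ℂ) else 0) := by
  refine (isWickMatrix_affineMatrix _ _ _ _).congr (fun p q => ?_) fun p q r s => ?_
  · obtain ⟨i, a⟩ := p
    obtain ⟨j, b⟩ := q
    by_cases hij : i = j
    · subst hij
      have hsource (c : Fin 4) : ∑ k, ∑ d, (if c = d then (Jmat n W i k : ℂ) else 0) / 2 *
          pauliSource s d = pauliSource s c / 2 := by
        simp only [ite_div, zero_div, ite_mul, zero_mul, Finset.sum_ite_eq, Finset.mem_univ,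
          if_true]
        rw [← Finset.sum_mul, ← Finset.sum_div, sum_ofReal_Jmat]
        ring
      by_cases hab : a = b <;>
        simp [inv_dualPrecision_apply, dualSource, Fintype.sum_prod_type, hsource,
          sum_pauli_mul_pauliSource, hab]
    · simp [hij]
  · have hcov (z : ℂ) : ∑ c, ∑ d, Complex.I * pauli c p.2 q.2 * ((if c = d then z else 0) / 2) *
        (Complex.I * pauli d r.2 s.2) = if p.2 = s.2 ∧ q.2 = r.2 then -z else 0 := by
      calc
        _ = -z / 2 * ∑ c, pauli c p.2 q.2 * pauli c r.2 s.2 := by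
          simp only [ite_div, zero_div, mul_ite, ite_mul, mul_zero, zero_mul, Finset.sum_ite_eq,
            Finset.mem_univ, if_true]
          rw [Finset.mul_sum]
          refine Finset.sum_congr rfl fun c _ => ?_
          linear_combination (pauli c p.2 q.2 * (z / 2) * pauli c r.2 s.2) * Complex.I_sq
        _ = _ := by
          rw [sum_pauli_mul_pauli]
          split_ifs <;> ring
    by_cases hpq : p.1 = q.1 <;> by_cases hrs : r.1 = s.1 <;>
      simp [inv_dualPrecision_apply, Fintype.sum_prod_type, hpq, hrs, hcov]

theorem F2_eq_dualExpectation (hW : 0 < W) (l₁ l₂ t : ℝ) :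
    F2 n W l₁ l₂ =
      gaussianExpectation (dualSource n ![(l₁ : ℂ) - t, (l₂ : ℂ) - t]) (posDef_dualPrecision n W)
        (dualBlocks n t).det := by
  rw [F2_eq_independentExpectation hW]
  refine (isWickMatrix_resolventBlocks hW _).map_det_eq
    ((isWickMatrix_dualBlocks n W t _).congr (fun p q => ?_) fun _ _ _ _ => rfl)
    (fun p q r s => ?_) ?_
  · obtain ⟨i, a⟩ := p
    fin_cases a <;> simp
  · by_cases h : (p.2 = q.2 ∧ r.2 = s.2) ∧ p.1 = s.1 ∧ q.1 = r.1
    · rw [if_pos h, if_pos ⟨⟨h.2.1, h.2.2.symm⟩, h.1.1, h.1.2.symm⟩, neg_neg, h.2.2]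
    · rw [if_neg h, if_neg fun h' => h ⟨⟨h'.2.1, h'.2.2.symm⟩, h'.1.1, h'.1.2.symm⟩, neg_zero]
  · rw [independentExpectation_one, gaussianExpectation_one]

end DualField

section PauliCoordinates

open Matrix

theorem pauliSum_eq (y : Fin 4 → ℝ) :
    pauliSum y = !![(y 0 : ℂ) + y 3, y 1 - Complex.I * y 2;
      y 1 + Complex.I * y 2, (y 0 : ℂ) - y 3] := by
  ext a b
  rw [pauliSum, Matrix.sum_apply, Fin.sum_univ_four]
  fin_cases a <;> fin_cases b <;> simp [pauli] <;> ring

theorem isHermitian_pauliSum (y : Fin 4 → ℝ) : (pauliSum y).IsHermitian := by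
  rw [pauliSum_eq, IsHermitian]
  ext a b
  fin_cases a <;> fin_cases b <;> simp
  ring

theorem trace_pauliSum (y : Fin 4 → ℝ) : (pauliSum y).trace = 2 * y 0 := by
  rw [pauliSum_eq, trace_fin_two_of]
  ring

theorem trace_pauliSum_sq (y : Fin 4 → ℝ) :
    (pauliSum y ^ 2).trace = 2 * ∑ c, (y c : ℂ) ^ 2 := by
  rw [pauliSum_eq, sq, mul_fin_two, trace_fin_two_of, Fin.sum_univ_four]
  linear_combination (-2 * (y 2 : ℂ) ^ 2) * Complex.I_sq

theorem pauliSum_add (y z : Fin 4 → ℝ) : pauliSum (y + z) = pauliSum y + pauliSum z := by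
  simp only [pauliSum, Pi.add_apply, Complex.ofReal_add, add_smul, Finset.sum_add_distrib]

theorem pauliSum_sub (y z : Fin 4 → ℝ) : pauliSum (y - z) = pauliSum y - pauliSum z := by
  simp only [pauliSum, Pi.sub_apply, Complex.ofReal_sub, sub_smul, Finset.sum_sub_distrib]

theorem pauliSum_smul (r : ℝ) (z : Fin 4 → ℝ) : pauliSum (r • z) = (r : ℂ) • pauliSum z := by
  simp only [pauliSum, Pi.smul_apply, smul_eq_mul, Complex.ofReal_mul, mul_smul, Finset.smul_sum]

theorem continuous_pauliSum : Continuous pauliSum := by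
  unfold pauliSum
  fun_prop

/-- The Pauli coordinates of a Hermitian `2 × 2` matrix. -/
noncomputable def pauliCoord (M : Matrix (Fin 2) (Fin 2) ℂ) : Fin 4 → ℝ :=
  fun c => (pauli c * M).trace.re / 2

theorem continuous_pauliCoord : Continuous pauliCoord := by
  unfold pauliCoord
  fun_prop

theorem pauliCoord_eq (M : Matrix (Fin 2) (Fin 2) ℂ) :
    pauliCoord M = ![((M 0 0).re + (M 1 1).re) / 2, ((M 1 0).re + (M 0 1).re) / 2,
      ((M 1 0).im - (M 0 1).im) / 2, ((M 0 0).re - (M 1 1).re) / 2] := by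
  funext c
  fin_cases c <;> simp [pauliCoord, pauli, trace_fin_two, vecMul_eq_sum] <;> ring

theorem pauliCoord_pauliSum (y : Fin 4 → ℝ) : pauliCoord (pauliSum y) = y := by
  rw [pauliCoord_eq, pauliSum_eq]
  funext c
  fin_cases c <;> simp

theorem pauliSum_injective : Function.Injective pauliSum :=
  Function.LeftInverse.injective pauliCoord_pauliSum

theorem pauliSum_pauliCoord {M : Matrix (Fin 2) (Fin 2) ℂ} (hM : M.IsHermitian) :
    pauliSum (pauliCoord M) = M := by
  have h00 : (M 0 0).im = 0 := Complex.conj_eq_iff_im.mp (hM.apply 0 0)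
  have h11 : (M 1 1).im = 0 := Complex.conj_eq_iff_im.mp (hM.apply 1 1)
  have h10 : M 1 0 = star (M 0 1) := (hM.apply 1 0).symm
  rw [pauliSum_eq, pauliCoord_eq]
  ext a b
  fin_cases a <;> fin_cases b <;> apply Complex.ext <;> simp [h00, h11, h10] <;> ring

end PauliCoordinates

section UnitaryConjugation

open Matrix

theorem trace_star_mul_mul_of_mem_unitaryGroup {m : Type*} [Fintype m] [DecidableEq m]
    {U : Matrix m m ℂ} (hU : U ∈ unitaryGroup m ℂ) (A : Matrix m m ℂ) :
    (star U * A * U).trace = A.trace := by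
  rw [trace_mul_comm, ← mul_assoc, Unitary.mul_star_self_of_mem hU, one_mul]

theorem star_mul_mul_sq_of_mem_unitaryGroup {m : Type*} [Fintype m] [DecidableEq m]
    {U : Matrix m m ℂ} (hU : U ∈ unitaryGroup m ℂ) (A : Matrix m m ℂ) :
    (star U * A * U) ^ 2 = star U * A ^ 2 * U := by
  calc (star U * A * U) ^ 2 = star U * A * (U * star U) * A * U := by simp only [sq, mul_assoc]
    _ = star U * A ^ 2 * U := by
      rw [Unitary.mul_star_self_of_mem hU, mul_one, sq, ← mul_assoc (star U)]

/-- The conjugation `X ↦ U* X U` in Pauli coordinates. -/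
noncomputable def pauliConj (U : unitaryGroup (Fin 2) ℂ) (y : Fin 4 → ℝ) : Fin 4 → ℝ :=
  pauliCoord (star (U : Matrix (Fin 2) (Fin 2) ℂ) * pauliSum y * U)

theorem continuous_pauliConj :
    Continuous fun p : unitaryGroup (Fin 2) ℂ × (Fin 4 → ℝ) => pauliConj p.1 p.2 := by
  unfold pauliConj
  have := continuous_pauliSum
  have := continuous_pauliCoord
  fun_prop

theorem pauliSum_pauliConj (U : unitaryGroup (Fin 2) ℂ) (y : Fin 4 → ℝ) :
    pauliSum (pauliConj U y) = star (U : Matrix (Fin 2) (Fin 2) ℂ) * pauliSum y * U :=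
  pauliSum_pauliCoord (isHermitian_conjTranspose_mul_mul _ (isHermitian_pauliSum y))

theorem pauliConj_pauliConj (V U : unitaryGroup (Fin 2) ℂ) (y : Fin 4 → ℝ) :
    pauliConj U (pauliConj V y) = pauliConj (V * U) y := by
  apply pauliSum_injective
  simp only [pauliSum_pauliConj, Submonoid.coe_mul, star_mul, mul_assoc]

theorem pauliConj_apply_zero (U : unitaryGroup (Fin 2) ℂ) (y : Fin 4 → ℝ) :
    pauliConj U y 0 = y 0 := by
  have h := trace_pauliSum (pauliConj U y)
  rw [pauliSum_pauliConj, trace_star_mul_mul_of_mem_unitaryGroup U.2, trace_pauliSum] at h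
  exact_mod_cast (mul_left_cancel₀ two_ne_zero h).symm

theorem sum_pauliConj_sq (U : unitaryGroup (Fin 2) ℂ) (y : Fin 4 → ℝ) :
    ∑ c, pauliConj U y c ^ 2 = ∑ c, y c ^ 2 := by
  have h := trace_pauliSum_sq (pauliConj U y)
  rw [pauliSum_pauliConj, star_mul_mul_sq_of_mem_unitaryGroup U.2,
    trace_star_mul_mul_of_mem_unitaryGroup U.2, trace_pauliSum_sq] at h
  exact_mod_cast (mul_left_cancel₀ two_ne_zero h).symm

/-- `pauliConj U` as a linear isometry: it preserves `Tr X² / 2`. -/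
noncomputable def pauliConjLinearIsometry (U : unitaryGroup (Fin 2) ℂ) :
    EuclideanSpace ℝ (Fin 4) →ₗᵢ[ℝ] EuclideanSpace ℝ (Fin 4) where
  toFun y := WithLp.toLp 2 (pauliConj U y.ofLp)
  map_add' y z := by
    refine congrArg (WithLp.toLp 2) (pauliSum_injective ?_)
    simp [pauliSum_add, pauliSum_pauliConj, mul_add, add_mul]
  map_smul' r y := by
    refine congrArg (WithLp.toLp 2) (pauliSum_injective ?_)
    simp [pauliSum_smul, pauliSum_pauliConj]
  norm_map' y := by
    simp only [EuclideanSpace.norm_eq, Real.norm_eq_abs, sq_abs]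
    exact congrArg Real.sqrt (sum_pauliConj_sq U y.ofLp)

theorem measurePreserving_pauliConj (U : unitaryGroup (Fin 2) ℂ) :
    MeasurePreserving (pauliConj U) :=
  ((PiLp.volume_preserving_ofLp (Fin 4)).comp
    ((pauliConjLinearIsometry U).toLinearIsometryEquiv rfl).measurePreserving).comp
      (PiLp.volume_preserving_toLp (Fin 4))

/-- The Pauli coordinates of `diag(a, b)`. -/
noncomputable def pauliDiag (a b : ℝ) : Fin 4 → ℝ :=
  ![(a + b) / 2, 0, 0, (a - b) / 2]

theorem continuous_pauliDiag : Continuous fun p : ℝ × ℝ => pauliDiag p.1 p.2 := by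
  unfold pauliDiag
  fun_prop

theorem pauliSum_pauliDiag (a b : ℝ) :
    pauliSum (pauliDiag a b) = diagonal ![(a : ℂ), (b : ℂ)] := by
  rw [pauliSum_eq]
  ext i j
  fin_cases i <;> fin_cases j <;> simp [pauliDiag] <;> ring

theorem sum_pauliDiag_sq (a b : ℝ) : ∑ c, pauliDiag a b c ^ 2 = (a ^ 2 + b ^ 2) / 2 := by
  simp only [pauliDiag, Fin.sum_univ_four, cons_val]
  ring

theorem exists_pauliConj_eq_pauliDiag_swap :
    ∃ U, ∀ a b, pauliConj U (pauliDiag a b) = pauliDiag b a := by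
  refine ⟨⟨!![0, 1; 1, 0], mem_unitaryGroup_iff.mpr ?_⟩, fun a b => pauliSum_injective ?_⟩
  · simp [star_eq_conjTranspose, ← Matrix.ext_iff, vecMul_eq_sum]
  · rw [pauliSum_pauliConj, pauliSum_pauliDiag, pauliSum_pauliDiag]
    simp [star_eq_conjTranspose, ← Matrix.ext_iff, Fin.forall_fin_two, mul_apply]

theorem exists_pauliConj_eq_pauliDiag (y : Fin 4 → ℝ) :
    ∃ U a b, pauliConj U y = pauliDiag a b := by
  have hY := isHermitian_pauliSum y
  refine ⟨hY.eigenvectorUnitary, hY.eigenvalues 0, hY.eigenvalues 1, pauliSum_injective ?_⟩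
  rw [pauliSum_pauliConj, pauliSum_pauliDiag, ← Unitary.conjStarAlgAut_star_apply (S := ℂ),
    hY.conjStarAlgAut_star_eigenvectorUnitary]
  congr 1
  funext i
  fin_cases i <;> rfl

theorem exists_pauliConj_eq_pauliDiag_add_sub_sqrt (y : Fin 4 → ℝ) :
    ∃ U, pauliConj U y =
      pauliDiag (y 0 + √(y 1 ^ 2 + y 2 ^ 2 + y 3 ^ 2)) (y 0 - √(y 1 ^ 2 + y 2 ^ 2 + y 3 ^ 2)) := by
  obtain ⟨U, a, b, hU⟩ := exists_pauliConj_eq_pauliDiag y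
  obtain ⟨S, hS⟩ := exists_pauliConj_eq_pauliDiag_swap
  have h0 : (a + b) / 2 = y 0 := by
    rw [← pauliConj_apply_zero U y, hU]
    rfl
  have hsq : y 1 ^ 2 + y 2 ^ 2 + y 3 ^ 2 = ((a - b) / 2) ^ 2 := by
    have h := sum_pauliConj_sq U y
    rw [hU, sum_pauliDiag_sq, Fin.sum_univ_four, ← h0] at h
    linear_combination -h
  rw [hsq, Real.sqrt_sq_eq_abs, ← h0]
  rcases le_total 0 ((a - b) / 2) with hab | hab
  · refine ⟨U, hU.trans ?_⟩
    rw [abs_of_nonneg hab]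
    congr 1 <;> ring
  · refine ⟨U * S, ?_⟩
    rw [← pauliConj_pauliConj, hU, hS, abs_of_nonpos hab]
    congr 1 <;> ring

end UnitaryConjugation

section MeasureTheoryPreliminaries

theorem lintegral_fun_norm {E : Type*} [NormedAddCommGroup E] [NormedSpace ℝ E]
    [FiniteDimensional ℝ E] [Nontrivial E] [MeasurableSpace E] [BorelSpace E] (μ : Measure E)
    [μ.IsAddHaarMeasure] {f : ℝ → ENNReal} (hf : Measurable f) :
    ∫⁻ x, f ‖x‖ ∂μ = Module.finrank ℝ E * μ (Metric.ball 0 1) *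
      ∫⁻ r in Set.Ioi (0 : ℝ), ENNReal.ofReal (r ^ (Module.finrank ℝ E - 1)) * f r := by
  have hpolar := μ.measurePreserving_homeomorphUnitSphereProd.lintegral_comp
    (f := fun p => f p.2) (by fun_prop)
  simp only [homeomorphUnitSphereProd_apply_snd_coe] at hpolar
  rw [lintegral_subtype_comap (measurableSet_singleton _).compl (fun x : E => f ‖x‖),
    restrict_compl_singleton, lintegral_prod _ (by fun_prop)] at hpolar
  simp only [hpolar, lintegral_const]
  rw [Measure.toSphere_apply_univ, Measure.volumeIoiPow,
    lintegral_withDensity_eq_lintegral_mul _ (by fun_prop) (by fun_prop), mul_comm,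
    ← lintegral_subtype_comap measurableSet_Ioi]
  rfl

theorem lintegral_eq_two_mul_setLIntegral_Ioi {f : ℝ → ENNReal} (hf : ∀ x, f (-x) = f x) :
    ∫⁻ x, f x = 2 * ∫⁻ x in Set.Ioi (0 : ℝ), f x := by
  have hneg := (Measure.measurePreserving_neg (volume : Measure ℝ)).setLIntegral_comp_preimage_emb
    (MeasurableEquiv.neg ℝ).measurableEmbedding f (Set.Ioi 0)
  rw [← lintegral_add_compl f (measurableSet_Ioi (a := (0 : ℝ))), two_mul, Set.compl_Ioi,
    ← Measure.restrict_congr_set (Iio_ae_eq_Iic (a := (0 : ℝ))), ← hneg]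
  simp only [hf, Set.neg_preimage, Set.neg_Ioi, neg_zero]

theorem lintegral_prod_eq_two_mul_lintegral_add_sub {f : ℝ × ℝ → ENNReal} (hf : Measurable f) :
    ∫⁻ p, f p = 2 * ∫⁻ t, ∫⁻ u, f (t + u, t - u) := by
  set L := Matrix.toLin (Module.Basis.finTwoProd ℝ) (Module.Basis.finTwoProd ℝ) !![1, 1; 1, -1]
  have hL : ∀ p, L p = (p.1 + p.2, p.1 - p.2) := fun p => by
    simp [L, Matrix.toLin_finTwoProd_apply, sub_eq_add_neg]
  have hdet : L.det = -2 := by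
    rw [LinearMap.det_toLin, Matrix.det_fin_two_of]
    norm_num
  have hmap := Measure.map_linearMap_addHaar_eq_smul_addHaar (volume : Measure (ℝ × ℝ))
    (f := L) (by rw [hdet]; norm_num)
  have hint : ∫⁻ p, f (L p) = 2⁻¹ * ∫⁻ p, f p := by
    rw [← lintegral_map hf L.continuous_of_finiteDimensional.measurable, hmap,
      lintegral_smul_measure, hdet, smul_eq_mul]
    congr 1
    rw [abs_inv, abs_neg, abs_two, ENNReal.ofReal_inv_of_pos two_pos, ENNReal.ofReal_ofNat]
  have hf' : Measurable fun p : ℝ × ℝ => f (p.1 + p.2, p.1 - p.2) := by fun_prop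
  rw [← lintegral_prod _ hf'.aemeasurable, ← Measure.volume_eq_prod]
  simp only [hL] at hint
  rw [hint, ← mul_assoc, ENNReal.mul_inv_cancel two_ne_zero ENNReal.ofNat_ne_top, one_mul]

theorem isMulRightInvariant_of_isProbabilityMeasure {G : Type*} [Group G] [TopologicalSpace G]
    [IsTopologicalGroup G] [CompactSpace G] [MeasurableSpace G] [BorelSpace G] (μ : Measure G)
    [μ.IsHaarMeasure] [IsProbabilityMeasure μ] : μ.IsMulRightInvariant where
  map_mul_right_eq_self g := by
    have : IsProbabilityMeasure (μ.map (· * g)) :=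
      Measure.isProbabilityMeasure_map (continuous_mul_const g).aemeasurable
    exact Measure.isHaarMeasure_eq_of_isProbabilityMeasure _ _

theorem lintegral_pi_prod {α : Type*} [MeasurableSpace α] {m : ℕ} (ν : Fin m → Measure α)
    [∀ i, SigmaFinite (ν i)] {f : Fin m → α → ENNReal} (hf : ∀ i, Measurable (f i)) :
    ∫⁻ x, ∏ i, f i (x i) ∂Measure.pi ν = ∏ i, ∫⁻ a, f i a ∂ν i := by
  induction m with
  | zero => simp
  | succ m ih =>
    have hmeas : Measurable fun y : Fin m → α => ∏ i, f i.succ (y i) := by fun_prop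
    calc ∫⁻ x, ∏ i, f i (x i) ∂Measure.pi ν
        = ∫⁻ p, f 0 p.1 * ∏ i : Fin m, f i.succ (p.2 i)
            ∂(ν 0).prod (Measure.pi fun i : Fin m => ν i.succ) := by
          simp only [Fin.prod_univ_succ]
          exact (measurePreserving_piFinSuccAbove ν 0).lintegral_comp
            (f := fun p => f 0 p.1 * ∏ i : Fin m, f i.succ (p.2 i)) (by fun_prop)
      _ = (∫⁻ a, f 0 a ∂ν 0) * ∏ i : Fin m, ∫⁻ a, f i.succ a ∂ν i.succ := by
          rw [← ih (fun i => ν i.succ) fun i => hf i.succ]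
          exact lintegral_prod_mul (ν := Measure.pi fun i : Fin m => ν i.succ)
            (hf 0).aemeasurable hmeas.aemeasurable
      _ = ∏ i, ∫⁻ a, f i a ∂ν i := (Fin.prod_univ_succ fun i => ∫⁻ a, f i a ∂ν i).symm

theorem pi_withDensity {α : Type*} [MeasurableSpace α] {m : ℕ} (ν : Fin m → Measure α)
    [∀ i, SigmaFinite (ν i)] {f : Fin m → α → ENNReal} (hf : ∀ i, Measurable (f i))
    [∀ i, SigmaFinite ((ν i).withDensity (f i))] :
    Measure.pi (fun i => (ν i).withDensity (f i)) =
      (Measure.pi ν).withDensity fun x => ∏ i, f i (x i) := by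
  refine Measure.pi_eq fun s hs => ?_
  have hind : (Set.univ.pi s).indicator (fun x => ∏ i, f i (x i)) =
      fun x => ∏ i, (s i).indicator (f i) (x i) := by
    funext x
    by_cases hx : x ∈ Set.univ.pi s
    · rw [Set.indicator_of_mem hx]
      exact Finset.prod_congr rfl fun i _ => (Set.indicator_of_mem (hx i trivial) _).symm
    · obtain ⟨i, hi⟩ : ∃ i, x i ∉ s i := by simpa [Set.mem_univ_pi] using hx
      rw [Set.indicator_of_notMem hx,
        Finset.prod_eq_zero (Finset.mem_univ i) (Set.indicator_of_notMem hi _)]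
  rw [withDensity_apply _ (MeasurableSet.univ_pi hs),
    ← lintegral_indicator (MeasurableSet.univ_pi hs), hind,
    lintegral_pi_prod ν fun i => (hf i).indicator (hs i)]
  refine Finset.prod_congr rfl fun i _ => ?_
  rw [lintegral_indicator (hs i), withDensity_apply _ (hs i)]

theorem measurePreserving_curry_symm (ι κ : Type*) [Fintype ι] [Fintype κ] {α : Type*}
    [MeasureSpace α] [SigmaFinite (volume : Measure α)] :
    MeasurePreserving (MeasurableEquiv.curry ι κ α).symm := by
  refine ⟨(MeasurableEquiv.curry ι κ α).symm.measurable, (Measure.pi_eq fun s _ => ?_).symm⟩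
  have hpre : (MeasurableEquiv.curry ι κ α).symm ⁻¹' Set.univ.pi s =
      Set.univ.pi fun i => Set.univ.pi fun j => s (i, j) := by
    ext y
    simp only [Set.mem_preimage, Set.mem_univ_pi, Prod.forall]
    rfl
  rw [MeasurableEquiv.map_apply, hpre, volume_pi_pi, Fintype.prod_prod_type]
  simp only [volume_pi_pi]

end MeasureTheoryPreliminaries

section CumulativeProducts

variable {G : Type*} [Group G]

/-- The cumulative products `V_j V_{j-1} ⋯ V_0` of a finite sequence in a group. -/
def cumProd : {m : ℕ} → (Fin m → G) → Fin m → G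
  | 0, _ => Fin.elim0
  | _ + 1, V => Fin.cons (V 0) fun j => cumProd (Fin.tail V) j * V 0

theorem cumProd_succ {m : ℕ} (V : Fin (m + 1) → G) (j : Fin m) :
    cumProd V j.succ = V j.succ * cumProd V j.castSucc := by
  induction m with
  | zero => exact j.elim0
  | succ m ih =>
    refine Fin.cases rfl (fun j => ?_) j
    calc cumProd V j.succ.succ = cumProd (Fin.tail V) j.succ * V 0 := rfl
      _ = V j.succ.succ * (cumProd (Fin.tail V) j.castSucc * V 0) := by
        rw [ih, mul_assoc]
        rfl
      _ = V j.succ.succ * cumProd V j.succ.castSucc := rfl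

theorem measurePreserving_cumProd [MeasurableSpace G] [MeasurableMul₂ G] (μ : Measure G)
    [IsProbabilityMeasure μ] [μ.IsMulRightInvariant] (m : ℕ) :
    MeasurePreserving (cumProd (G := G) (m := m)) (Measure.pi fun _ => μ)
      (Measure.pi fun _ => μ) := by
  induction m with
  | zero =>
    rw [show cumProd (G := G) (m := 0) = id from funext fun V => funext fun j => j.elim0]
    exact MeasurePreserving.id _
  | succ m ih =>
    have hsplit := measurePreserving_piFinSuccAbove (fun _ : Fin (m + 1) => μ) 0
    have hmul (g : G) := measurePreserving_pi (fun _ : Fin m => μ) _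
      fun _ => measurePreserving_mul_right μ g
    have hskew := (MeasurePreserving.id μ).skew_product
      (g := fun g V j => cumProd V j * g) (μc := Measure.pi fun _ : Fin m => μ)
      (by
        have := ih.measurable
        fun_prop)
      (Filter.Eventually.of_forall fun g => ((hmul g).comp ih).map_eq)
    convert (hsplit.symm.comp hskew).comp hsplit using 1
    funext V
    exact (Fin.insertNth_zero (α := fun _ => G) _ _).symm

end CumulativeProducts

section WeylIntegration

open Matrix

instance compactSpace_unitaryGroup {m : Type*} [Fintype m] [DecidableEq m] :
    CompactSpace (unitaryGroup m ℂ) := by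
  have hcube : IsCompact (Set.univ.pi fun _ : m => Set.univ.pi fun _ : m =>
      Metric.closedBall (0 : ℂ) 1) :=
    isCompact_univ_pi fun _ => isCompact_univ_pi fun _ => isCompact_closedBall _ _
  refine isCompact_iff_compactSpace.mp <|
    hcube.of_isClosed_subset (isClosed_unitary (R := Matrix m m ℂ)) fun U hU i _ j _ =>
      mem_closedBall_zero_iff.mpr (entry_norm_bound_of_unitary hU i j)

instance secondCountableTopology_unitaryGroup {m : Type*} [Fintype m] [DecidableEq m] :
    SecondCountableTopology (unitaryGroup m ℂ) :=
  have : SecondCountableTopology (Matrix m m ℂ) :=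
    inferInstanceAs (SecondCountableTopology (m → m → ℂ))
  TopologicalSpace.Subtype.secondCountableTopology (α := Matrix m m ℂ) _

theorem lintegral_fin_four_radial {H : ℝ → ℝ → ENNReal} (hH : Measurable (Function.uncurry H)) :
    ∫⁻ y : Fin 4 → ℝ, H (y 0) (√(y 1 ^ 2 + y 2 ^ 2 + y 3 ^ 2)) =
      ∫⁻ t, ENNReal.ofReal (4 * Real.pi) *
        ∫⁻ u in Set.Ioi (0 : ℝ), ENNReal.ofReal (u ^ 2) * H t u := by
  have hsphere : 3 * volume (Metric.ball (0 : EuclideanSpace ℝ (Fin 3)) 1) =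
      ENNReal.ofReal (4 * Real.pi) := by
    rw [EuclideanSpace.volume_ball_fin_three, ENNReal.ofReal_one, one_pow, one_mul,
      ← ENNReal.ofReal_ofNat, ← ENNReal.ofReal_mul (by norm_num)]
    congr 1
    ring
  have hmeas : Measurable fun p : ℝ × (Fin 3 → ℝ) =>
      H p.1 (√(p.2 0 ^ 2 + p.2 1 ^ 2 + p.2 2 ^ 2)) :=
    hH.comp (g := Function.uncurry H)
      (by fun_prop : Measurable fun p : ℝ × (Fin 3 → ℝ) =>
        (p.1, √(p.2 0 ^ 2 + p.2 1 ^ 2 + p.2 2 ^ 2)))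
  calc ∫⁻ y : Fin 4 → ℝ, H (y 0) (√(y 1 ^ 2 + y 2 ^ 2 + y 3 ^ 2))
      = ∫⁻ p : ℝ × (Fin 3 → ℝ), H p.1 (√(p.2 0 ^ 2 + p.2 1 ^ 2 + p.2 2 ^ 2)) :=
        (volume_preserving_piFinSuccAbove (fun _ : Fin 4 => ℝ) 0).lintegral_comp hmeas
    _ = ∫⁻ t, ∫⁻ r : Fin 3 → ℝ, H t (√(r 0 ^ 2 + r 1 ^ 2 + r 2 ^ 2)) :=
        lintegral_prod _ hmeas.aemeasurable
    _ = _ := lintegral_congr fun t => ?_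
  have hHt : Measurable (H t) := hH.comp (measurable_prodMk_left (x := t))
  rw [← hsphere]
  refine Eq.trans ?_ (((PiLp.volume_preserving_toLp (Fin 3)).lintegral_comp
    (f := fun r => H t ‖r‖) (hHt.comp measurable_norm)).trans ?_)
  · simp [EuclideanSpace.norm_eq, Fin.sum_univ_three]
  · simpa using lintegral_fun_norm (volume : Measure (EuclideanSpace ℝ (Fin 3))) hHt

/-- The Weyl density `π (a - b)² / 4` of the eigenvalue pair of a Hermitian `2 × 2` matrix,
normalised for Lebesgue measure in Pauli coordinates. -/
noncomputable def weylDensity (p : ℝ × ℝ) : ENNReal :=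
  ENNReal.ofReal (Real.pi / 4 * (p.1 - p.2) ^ 2)

theorem measurable_weylDensity : Measurable weylDensity := by
  unfold weylDensity
  fun_prop

instance sigmaFinite_withDensity_weylDensity :
    SigmaFinite ((volume : Measure (ℝ × ℝ)).withDensity weylDensity) :=
  SigmaFinite.withDensity fun p : ℝ × ℝ => Real.toNNReal (Real.pi / 4 * (p.1 - p.2) ^ 2)

theorem lintegral_symmetric_eigenvalues {H : ℝ × ℝ → ENNReal} (hH : Measurable H)
    (hsymm : ∀ p, H p.swap = H p) :
    ∫⁻ y : Fin 4 → ℝ, H (y 0 + √(y 1 ^ 2 + y 2 ^ 2 + y 3 ^ 2),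
        y 0 - √(y 1 ^ 2 + y 2 ^ 2 + y 3 ^ 2)) =
      ∫⁻ p, weylDensity p * H p := by
  have hweight (u : ℝ) : 2 * (2 * ENNReal.ofReal (Real.pi / 4 * (2 * u) ^ 2)) =
      ENNReal.ofReal (4 * Real.pi) * ENNReal.ofReal (u ^ 2) := by
    rw [← ENNReal.ofReal_ofNat, ← ENNReal.ofReal_mul zero_le_two, ← ENNReal.ofReal_mul zero_le_two,
      ← ENNReal.ofReal_mul (by positivity)]
    congr 1
    ring
  have hdensity (t u : ℝ) :
      weylDensity (t + u, t - u) = ENNReal.ofReal (Real.pi / 4 * (2 * u) ^ 2) := by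
    unfold weylDensity
    congr 3
    ring
  have heven (t u : ℝ) : ENNReal.ofReal (Real.pi / 4 * (2 * -u) ^ 2) * H (t + -u, t - -u) =
      ENNReal.ofReal (Real.pi / 4 * (2 * u) ^ 2) * H (t + u, t - u) := by
    rw [← hsymm (t + u, t - u), Prod.swap_prod_mk, mul_neg, neg_sq, sub_neg_eq_add,
      ← sub_eq_add_neg]
  rw [lintegral_fin_four_radial (H := fun t u => H (t + u, t - u)) (by
      unfold Function.uncurry
      fun_prop),
    lintegral_prod_eq_two_mul_lintegral_add_sub (f := fun p => weylDensity p * H p)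
      (measurable_weylDensity.mul hH),
    ← lintegral_const_mul' _ _ ENNReal.ofNat_ne_top]
  simp only [hdensity]
  refine lintegral_congr fun t => ?_
  rw [lintegral_eq_two_mul_setLIntegral_Ioi (heven t),
    ← lintegral_const_mul' _ _ ENNReal.ofReal_ne_top,
    ← lintegral_const_mul' _ _ ENNReal.ofNat_ne_top,
    ← lintegral_const_mul' _ _ ENNReal.ofNat_ne_top]
  simp only [← mul_assoc, ← hweight]

/-- The Pauli coordinates of `U* diag(a, b) U`. -/
noncomputable def pauliSpectral (p : (ℝ × ℝ) × unitaryGroup (Fin 2) ℂ) : Fin 4 → ℝ :=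
  pauliConj p.2 (pauliDiag p.1.1 p.1.2)

theorem continuous_pauliSpectral : Continuous pauliSpectral := by
  have hdiag : Continuous fun p : (ℝ × ℝ) × unitaryGroup (Fin 2) ℂ => pauliDiag p.1.1 p.1.2 :=
    continuous_pauliDiag.comp continuous_fst
  have hconj := continuous_snd.prodMk hdiag
  have hcomp := Continuous.comp
    (g := fun p : unitaryGroup (Fin 2) ℂ × (Fin 4 → ℝ) => pauliConj p.1 p.2)
    continuous_pauliConj hconj
  exact hcomp

variable (μ : Measure (unitaryGroup (Fin 2) ℂ)) [μ.IsHaarMeasure] [IsProbabilityMeasure μ]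

theorem lintegral_eq_lintegral_pauliConj {F : (Fin 4 → ℝ) → ENNReal} (hF : Measurable F) :
    ∫⁻ y, F y = ∫⁻ y, ∫⁻ U, F (pauliConj U y) ∂μ := by
  have hmeas : Measurable fun p : unitaryGroup (Fin 2) ℂ × (Fin 4 → ℝ) =>
      F (pauliConj p.1 p.2) := hF.comp continuous_pauliConj.measurable
  calc ∫⁻ y, F y = ∫⁻ U, ∫⁻ y, F (pauliConj U y) ∂volume ∂μ := by
        simp only [(measurePreserving_pauliConj _).lintegral_comp hF, lintegral_const,
          measure_univ, mul_one]
    _ = _ := lintegral_lintegral_swap hmeas.aemeasurable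

theorem measurePreserving_pauliSpectral :
    MeasurePreserving pauliSpectral
      (((volume : Measure (ℝ × ℝ)).withDensity weylDensity).prod μ) volume := by
  refine ⟨continuous_pauliSpectral.measurable, Measure.ext_of_lintegral _ fun F hF => ?_⟩
  set g : (Fin 4 → ℝ) → ENNReal := fun y => ∫⁻ U, F (pauliConj U y) ∂μ with hg
  have hgmeas : Measurable g :=
    Measurable.lintegral_prod_left' (hF.comp continuous_pauliConj.measurable)
  have hginv (V y) : g (pauliConj V y) = g y := by
    simp only [hg, pauliConj_pauliConj]
    exact lintegral_mul_left_eq_self (fun U => F (pauliConj U y)) V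
  have hgdiag : Measurable fun p : ℝ × ℝ => g (pauliDiag p.1 p.2) :=
    hgmeas.comp continuous_pauliDiag.measurable
  obtain ⟨S, hS⟩ := exists_pauliConj_eq_pauliDiag_swap
  calc ∫⁻ y, F y ∂(((volume : Measure (ℝ × ℝ)).withDensity weylDensity).prod μ).map pauliSpectral
      = ∫⁻ p, g (pauliDiag p.1 p.2) ∂(volume : Measure (ℝ × ℝ)).withDensity weylDensity := by
        rw [lintegral_map hF continuous_pauliSpectral.measurable,
          lintegral_prod (fun p => F (pauliSpectral p))
            (hF.comp continuous_pauliSpectral.measurable).aemeasurable]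
        rfl
    _ = ∫⁻ p, weylDensity p * g (pauliDiag p.1 p.2) :=
        lintegral_withDensity_eq_lintegral_mul _ measurable_weylDensity hgdiag
    _ = ∫⁻ y, g y := by
        have hsymm (p : ℝ × ℝ) : g (pauliDiag p.2 p.1) = g (pauliDiag p.1 p.2) := by
          rw [← hS, hginv]
        rw [← lintegral_symmetric_eigenvalues hgdiag hsymm]
        refine lintegral_congr fun y => ?_
        obtain ⟨V, hV⟩ := exists_pauliConj_eq_pauliDiag_add_sub_sqrt y
        rw [← hV, hginv]
    _ = ∫⁻ y, F y := (lintegral_eq_lintegral_pauliConj μ hF).symm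

theorem measurePreserving_pauliSpectral_cumProd (m : ℕ) :
    MeasurePreserving (fun (p : (Fin m → ℝ × ℝ) × (Fin m → unitaryGroup (Fin 2) ℂ)) j =>
        pauliSpectral (p.1 j, cumProd p.2 j))
      (((volume : Measure (Fin m → ℝ × ℝ)).withDensity fun p => ∏ j, weylDensity (p j)).prod
        (Measure.pi fun _ => μ)) volume := by
  have := isMulRightInvariant_of_isProbabilityMeasure μ
  have hspectral := measurePreserving_pi
    (fun _ : Fin m => ((volume : Measure (ℝ × ℝ)).withDensity weylDensity).prod μ)
    (fun _ => volume) fun _ => measurePreserving_pauliSpectral μ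
  have hzip := (measurePreserving_arrowProdEquivProdArrow (ℝ × ℝ) (unitaryGroup (Fin 2) ℂ) (Fin m)
    (fun _ => volume.withDensity weylDensity) fun _ => μ).symm
  have hcum := (MeasurePreserving.id (Measure.pi fun _ : Fin m =>
    (volume : Measure (ℝ × ℝ)).withDensity weylDensity)).prod (measurePreserving_cumProd μ m)
  have htotal := (hspectral.comp hzip).comp hcum
  rwa [pi_withDensity _ fun _ => measurable_weylDensity] at htotal

/-- The Pauli coordinates of the chain `X_j = P_j* diag(a_j, b_j) P_j`, where `P_j` is the
cumulative product `V_j ⋯ V_0`. -/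
noncomputable def pauliChain {m : ℕ} (a b : Fin m → ℝ) (V : Fin m → unitaryGroup (Fin 2) ℂ)
    (j : Fin m) : Fin 4 → ℝ :=
  pauliSpectral ((a j, b j), cumProd V j)

theorem integral_eq_integral_pauliChain {m : ℕ} {Φ : (Fin m → Fin 4 → ℝ) → ℂ}
    (hΦ : Integrable Φ) :
    ∫ x, Φ x = ∫ ab : (Fin m → ℝ) × (Fin m → ℝ), ∫ V : Fin m → unitaryGroup (Fin 2) ℂ,
      ((∏ j, (Real.pi / 4 * (ab.1 j - ab.2 j) ^ 2) : ℝ) : ℂ) *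
        Φ (pauliChain ab.1 ab.2 V) ∂(Measure.pi fun _ => μ) := by
  have hmp := measurePreserving_pauliSpectral_cumProd μ m
  have hdens : Measurable fun p : Fin m → ℝ × ℝ => ∏ j, weylDensity (p j) := by
    have := measurable_weylDensity
    fun_prop
  have hdens_lt_top (p : Fin m → ℝ × ℝ) : ∏ j, weylDensity (p j) < ⊤ :=
    ENNReal.prod_lt_top fun _ _ => ENNReal.ofReal_lt_top
  have hdens_toReal (ab : (Fin m → ℝ) × (Fin m → ℝ)) :
      (∏ j, weylDensity (ab.1 j, ab.2 j)).toReal =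
        ∏ j, (Real.pi / 4 * (ab.1 j - ab.2 j) ^ 2) := by
    rw [ENNReal.toReal_prod]
    exact Finset.prod_congr rfl fun j _ => ENNReal.toReal_ofReal (by positivity)
  have hint : Integrable (fun p : (Fin m → ℝ × ℝ) × (Fin m → unitaryGroup (Fin 2) ℂ) =>
      Φ fun j => pauliSpectral (p.1 j, cumProd p.2 j))
      ((volume.withDensity fun p => ∏ j, weylDensity (p j)).prod (Measure.pi fun _ => μ)) :=
    hmp.integrable_comp_of_integrable hΦ
  rw [← hmp.map_eq] at hΦ
  rw [← hmp.map_eq, integral_map hmp.aemeasurable hΦ.aestronglyMeasurable, integral_prod _ hint,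
    integral_withDensity_eq_integral_toReal_smul hdens (.of_forall hdens_lt_top),
    ← (volume_measurePreserving_arrowProdEquivProdArrow ℝ ℝ (Fin m)).symm.integral_comp']
  refine integral_congr_ae (.of_forall fun ab => ?_)
  dsimp only
  rw [integral_const_mul, ← hdens_toReal]
  exact Complex.real_smul

end WeylIntegration

section EigenvalueCoordinates

open Matrix

theorem pad_val {m : ℕ} (x : Fin m → ℝ) (j : Fin m) : pad m x j = x j := by
  simp only [pad, j.isLt, dif_pos]

variable {n : ℕ} (a b : Fin (2 * n + 1) → ℝ) (V : Fin (2 * n + 1) → unitaryGroup (Fin 2) ℂ)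

theorem Amat_val (j : Fin (2 * n + 1)) :
    Amat n a b j = diagonal ![(a j : ℂ), (b j : ℂ)] := by
  rw [Amat, pad_val, pad_val]

theorem Vpad_val (j : Fin (2 * n + 1)) : Vpad n V j = V j := by
  simp only [Vpad, j.isLt, dif_pos]

theorem Pprod_mul_eq_cumProd (j : Fin (2 * n + 1)) :
    Pprod n V j * (V 0 : Matrix (Fin 2) (Fin 2) ℂ) = (cumProd V j).1 := by
  induction j using Fin.induction with
  | zero => exact one_mul _
  | succ k ih =>
    rw [Fin.val_castSucc] at ih
    rw [Fin.val_succ, Pprod, mul_assoc, ih, cumProd_succ, ← Fin.val_succ, Vpad_val]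
    rfl

theorem pauliSum_pauliChain (j : Fin (2 * n + 1)) :
    pauliSum (pauliChain a b V j) =
      star (cumProd V j).1 * Amat n a b j * cumProd V j := by
  rw [pauliChain, pauliSpectral, pauliSum_pauliConj, pauliSum_pauliDiag, Amat_val]

theorem trace_pauliSum_pauliChain (j : Fin (2 * n + 1)) :
    (pauliSum (pauliChain a b V j)).trace = a j + b j := by
  rw [pauliSum_pauliChain, trace_star_mul_mul_of_mem_unitaryGroup (cumProd V j).2, Amat_val,
    trace_diagonal, Fin.sum_univ_two]
  rfl

theorem sum_pauliChain_sq (j : Fin (2 * n + 1)) :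
    ∑ c, pauliChain a b V j c ^ 2 = (a j ^ 2 + b j ^ 2) / 2 := by
  rw [pauliChain, pauliSpectral, sum_pauliConj_sq, sum_pauliDiag_sq]

theorem det_smul_one_add_I_smul_pauliSum_pauliChain (t : ℂ) (j : Fin (2 * n + 1)) :
    (t • 1 + Complex.I • pauliSum (pauliChain a b V j)).det =
      -((a j - Complex.I * t) * (b j - Complex.I * t)) := by
  have hunit : star (cumProd V j).1 * cumProd V j = 1 :=
    Unitary.star_mul_self_of_mem (cumProd V j).2
  have hconj : t • 1 + Complex.I • pauliSum (pauliChain a b V j) =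
      star (cumProd V j).1 * (t • 1 + Complex.I • Amat n a b j) *
        cumProd V j := by
    rw [pauliSum_pauliChain, mul_add, add_mul, mul_smul_comm, smul_mul_assoc, mul_one, hunit,
      mul_smul_comm, smul_mul_assoc]
  have hdiag : t • 1 + Complex.I • Amat n a b j =
      diagonal ![t + Complex.I * a j, t + Complex.I * b j] := by
    rw [Amat_val]
    ext i k
    fin_cases i <;> fin_cases k <;> simp
  rw [hconj, det_mul_right_comm, hunit, one_mul, hdiag, det_diagonal, Fin.prod_univ_two]
  simp only [cons_val_zero, cons_val_one]
  linear_combination (a j * b j + t ^ 2 : ℂ) * Complex.I_sq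

theorem trace_hopping (k : Fin (2 * n)) :
    ((star (Vpad n V (k + 1)) * Amat n a b (k + 1) * Vpad n V (k + 1) - Amat n a b k) ^ 2).trace =
      2 * ∑ c, ((pauliChain a b V k.succ c - pauliChain a b V k.castSucc c : ℝ) : ℂ) ^ 2 := by
  have hunit := (cumProd V k.castSucc).2
  have hconj : pauliSum (pauliChain a b V k.succ - pauliChain a b V k.castSucc) =
      star (cumProd V k.castSucc).1 *
        (star (Vpad n V (k + 1)) * Amat n a b (k + 1) * Vpad n V (k + 1) - Amat n a b k) *
          (cumProd V k.castSucc).1 := by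
    rw [pauliSum_sub, pauliSum_pauliChain, pauliSum_pauliChain, cumProd_succ, ← Fin.val_succ,
      Vpad_val, Submonoid.coe_mul, star_mul, Fin.val_castSucc]
    noncomm_ring
  rw [← trace_star_mul_mul_of_mem_unitaryGroup hunit, ← star_mul_mul_sq_of_mem_unitaryGroup hunit,
    ← hconj, trace_pauliSum_sq]
  rfl

theorem sum_pauliSource_mul (s : Fin 2 → ℂ) (y : Fin 4 → ℝ) :
    ∑ c, pauliSource s c * y c = -Complex.I * (pauliSum y * diagonal s).trace := by
  rw [pauliSum_eq, Fin.sum_univ_four, trace_fin_two, mul_diagonal, mul_diagonal]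
  simp only [pauliSource, of_apply, cons_val]
  ring

/-- The hopping energy `∑_j Tr (V_j* A_j V_j - A_{j-1})²`. -/
noncomputable def hoppingEnergy : ℂ :=
  ∑ j ∈ Finset.Ico 1 (2 * n + 1),
    ((star (Vpad n V j) * Amat n a b j * Vpad n V j - Amat n a b (j - 1)) ^ 2).trace

/-- The source term `∑_j Tr ((P_j U)* A_j (P_j U) diag(ξ₁, ξ₂))`, with `U` in slot `0` of `V`. -/
noncomputable def sourceTerm (ξ₁ ξ₂ : ℝ) : ℂ :=
  ∑ j ∈ Finset.range (2 * n + 1),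
    (star (Pprod n V j * (V 0).1) * Amat n a b j * (Pprod n V j * (V 0).1) *
      diagonal ![(ξ₁ : ℂ), (ξ₂ : ℂ)]).trace

theorem dualPrecision_pauliChain (W : ℝ) :
    ((((fun k => pauliChain a b V k.1 k.2) ⬝ᵥ
        dualPrecision n W *ᵥ fun k => pauliChain a b V k.1 k.2 : ℝ)) : ℂ) =
      (W : ℂ) ^ 2 / 2 * hoppingEnergy a b V + ∑ j, ((a j : ℂ) ^ 2 + b j ^ 2) / 2 := by
  have hhop : hoppingEnergy a b V = 2 * ∑ k : Fin (2 * n), ∑ c,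
      ((pauliChain a b V k.succ c - pauliChain a b V k.castSucc c : ℝ) : ℂ) ^ 2 := by
    rw [hoppingEnergy, Finset.sum_Ico_eq_sum_range, Nat.add_sub_cancel, Finset.sum_range,
      Finset.mul_sum]
    exact Finset.sum_congr rfl fun k _ => by rw [← trace_hopping, add_comm 1, Nat.add_sub_cancel]
  have hmass (j : Fin (2 * n + 1)) :
      ((a j : ℂ) ^ 2 + b j ^ 2) / 2 = ∑ c, (pauliChain a b V j c : ℂ) ^ 2 := by
    exact_mod_cast (sum_pauliChain_sq a b V j).symm
  rw [dotProduct_dualPrecision_mulVec, hhop]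
  simp only [dotProduct_precision_mulVec, hmass, Finset.sum_add_distrib, ← Finset.mul_sum]
  rw [Finset.sum_comm, Finset.sum_comm (γ := Fin (2 * n + 1))]
  push_cast
  ring

theorem dualSource_pauliChain (r : ℂ) (ξ₁ ξ₂ R : ℝ) :
    ∑ k, dualSource n ![r + ξ₁ / R, r + ξ₂ / R] k * pauliChain a b V k.1 k.2 =
      -(Complex.I * r) * ∑ j, ((a j : ℂ) + b j) - Complex.I / R * sourceTerm a b V ξ₁ ξ₂ := by
  have hdiag : diagonal ![r + ξ₁ / R, r + ξ₂ / R] =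
      r • (1 : Matrix (Fin 2) (Fin 2) ℂ) + (R : ℂ)⁻¹ • diagonal ![(ξ₁ : ℂ), (ξ₂ : ℂ)] := by
    ext i k
    fin_cases i <;> fin_cases k <;> simp [div_eq_inv_mul]
  have hsource (j : Fin (2 * n + 1)) :
      ∑ c, dualSource n ![r + ξ₁ / R, r + ξ₂ / R] (j, c) * pauliChain a b V j c =
        -(Complex.I * r) * (a j + b j) - Complex.I / R *
          (pauliSum (pauliChain a b V j) * diagonal ![(ξ₁ : ℂ), (ξ₂ : ℂ)]).trace := by
    refine (sum_pauliSource_mul _ _).trans ?_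
    rw [hdiag, mul_add, trace_add, mul_smul_comm, mul_smul_comm, mul_one, trace_smul, trace_smul,
      trace_pauliSum_pauliChain, smul_eq_mul, smul_eq_mul]
    ring
  rw [Fintype.sum_prod_type, sourceTerm, Finset.sum_range]
  simp only [hsource, Finset.sum_sub_distrib, ← Finset.mul_sum, Pprod_mul_eq_cumProd,
    pauliSum_pauliChain]

end EigenvalueCoordinates

section EigenvalueRepresentation

open Matrix

theorem exp_neg_ffun (l x : ℝ) (hx : x ≠ 0) :
    Complex.exp (-ffun l x) =
      (x - Complex.I * l / 2) * Complex.exp (-(x + Complex.I * l / 2) ^ 2 / 2) := by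
  have hne : (x : ℂ) - Complex.I * l / 2 ≠ 0 := fun h => hx (by simpa using congrArg Complex.re h)
  rw [ffun, neg_sub, sub_eq_add_neg, Complex.exp_add, Complex.exp_log hne, ← neg_div]

/-- The source `λ_a - λ₀/2` that remains when the constant `λ₀/2` is split off from the spectral
parameters `λ_a = λ₀ + ξ_a / (N ρ(λ₀))`; this choice completes the squares in `f`. -/
noncomputable def spectralSource (n : ℕ) (l ξ₁ ξ₂ : ℝ) : Fin 2 → ℂ :=
  ![l / 2 + ξ₁ / ((2 * n + 1) * rho l : ℝ), l / 2 + ξ₂ / ((2 * n + 1) * rho l : ℝ)]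

theorem sub_eq_spectralSource (n : ℕ) (l ξ₁ ξ₂ : ℝ) :
    ![((l + ξ₁ / ((2 * n + 1) * rho l) : ℝ) : ℂ) - (l / 2 : ℝ),
      ((l + ξ₂ / ((2 * n + 1) * rho l) : ℝ) : ℂ) - (l / 2 : ℝ)] = spectralSource n l ξ₁ ξ₂ := by
  ext c
  fin_cases c <;> simp [spectralSource] <;> ring

variable {n : ℕ}

theorem gaussianWeight_pauliChain (W l ξ₁ ξ₂ : ℝ) (a b : Fin (2 * n + 1) → ℝ)
    (V : Fin (2 * n + 1) → unitaryGroup (Fin 2) ℂ) :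
    gaussianWeight (dualPrecision n W) (dualSource n (spectralSource n l ξ₁ ξ₂))
        (fun k => pauliChain a b V k.1 k.2) =
      Complex.exp (-(2 * n + 1) * l ^ 2 / 4) *
        (Complex.exp (-(W ^ 2 / 2) * hoppingEnergy a b V -
            Complex.I / ((2 * n + 1) * rho l : ℝ) * sourceTerm a b V ξ₁ ξ₂) *
          ∏ j, Complex.exp (-(a j + Complex.I * l / 2) ^ 2 / 2) *
            Complex.exp (-(b j + Complex.I * l / 2) ^ 2 / 2)) := by
  have hsquare (j : Fin (2 * n + 1)) :
      -(a j + Complex.I * l / 2) ^ 2 / 2 + -(b j + Complex.I * l / 2) ^ 2 / 2 =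
        (l : ℂ) ^ 2 / 4 - Complex.I * (l / 2) * (a j + b j) - ((a j : ℂ) ^ 2 + b j ^ 2) / 2 := by
    linear_combination (-(l : ℂ) ^ 2 / 4) * Complex.I_sq
  simp only [← Complex.exp_add, ← Complex.exp_sum, hsquare, Finset.sum_sub_distrib,
    ← Finset.mul_sum, Finset.sum_const, Finset.card_univ, Fintype.card_fin, nsmul_eq_mul]
  rw [gaussianWeight, realEval_gaussianExponent, spectralSource,
    dualPrecision_pauliChain, dualSource_pauliChain]
  congr 1
  push_cast
  ring

theorem prod_det_mul_gaussianWeight_pauliChain (W l ξ₁ ξ₂ : ℝ) {a b : Fin (2 * n + 1) → ℝ}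
    (ha : ∀ j, a j ≠ 0) (hb : ∀ j, b j ≠ 0) (V : Fin (2 * n + 1) → unitaryGroup (Fin 2) ℂ) :
    (∏ j, ((l / 2 : ℂ) • 1 + Complex.I • pauliSum (pauliChain a b V j)).det) *
        gaussianWeight (dualPrecision n W) (dualSource n (spectralSource n l ξ₁ ξ₂))
          (fun k => pauliChain a b V k.1 k.2) =
      -Complex.exp (-(2 * n + 1) * l ^ 2 / 4) *
        Complex.exp (-(W ^ 2 / 2) * hoppingEnergy a b V - ∑ j, (ffun l (a j) + ffun l (b j)) -
          Complex.I / ((2 * n + 1) * rho l : ℝ) * sourceTerm a b V ξ₁ ξ₂) := by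
  have hsite (j : Fin (2 * n + 1)) :
      ((l / 2 : ℂ) • 1 + Complex.I • pauliSum (pauliChain a b V j)).det *
          (Complex.exp (-(a j + Complex.I * l / 2) ^ 2 / 2) *
            Complex.exp (-(b j + Complex.I * l / 2) ^ 2 / 2)) =
        -1 * Complex.exp (-(ffun l (a j) + ffun l (b j))) := by
    rw [det_smul_one_add_I_smul_pauliSum_pauliChain, neg_add, Complex.exp_add,
      exp_neg_ffun _ _ (ha j), exp_neg_ffun _ _ (hb j)]
    ring
  have hodd : (-1 : ℂ) ^ (2 * n + 1) = -1 := Odd.neg_one_pow ⟨n, rfl⟩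
  have hprod : (∏ j, ((l / 2 : ℂ) • 1 + Complex.I • pauliSum (pauliChain a b V j)).det) *
      ∏ j, (Complex.exp (-(a j + Complex.I * l / 2) ^ 2 / 2) *
        Complex.exp (-(b j + Complex.I * l / 2) ^ 2 / 2)) =
      -Complex.exp (-∑ j, (ffun l (a j) + ffun l (b j))) := by
    rw [← Finset.prod_mul_distrib, Finset.prod_congr rfl fun j _ => hsite j,
      Finset.prod_mul_distrib, ← Complex.exp_sum, Finset.sum_neg_distrib]
    simp [hodd]
  rw [gaussianWeight_pauliChain, mul_left_comm, mul_left_comm (∏ j, _), hprod, sub_right_comm,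
    sub_eq_add_neg _ (∑ j, _), Complex.exp_add]
  ring

theorem G2_eq (W l ξ₁ ξ₂ : ℝ) (a b : Fin (2 * n + 1) → ℝ)
    (V : Fin (2 * n + 1) → unitaryGroup (Fin 2) ℂ) :
    G2 n W l ξ₁ ξ₂ a b V =
      Complex.exp (-(W ^ 2 / 2) * hoppingEnergy a b V - ∑ j, (ffun l (a j) + ffun l (b j)) -
          Complex.I / ((2 * n + 1) * rho l : ℝ) * sourceTerm a b V ξ₁ ξ₂) *
        ∏ j, ((a j - b j : ℝ) : ℂ) ^ 2 := by
  simp only [G2, Finset.sum_range fun j => ffun l (pad _ a j) + ffun l (pad _ b j),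
    Finset.prod_range, pad_val]
  rfl

theorem weylDensity_mul_prod_det_mul_gaussianWeight_pauliChain (W l ξ₁ ξ₂ : ℝ)
    {a b : Fin (2 * n + 1) → ℝ} (ha : ∀ j, a j ≠ 0) (hb : ∀ j, b j ≠ 0)
    (V : Fin (2 * n + 1) → unitaryGroup (Fin 2) ℂ) :
    ((∏ j, (Real.pi / 4 * (a j - b j) ^ 2) : ℝ) : ℂ) *
        ((∏ j, ((l / 2 : ℂ) • 1 + Complex.I • pauliSum (pauliChain a b V j)).det) *
          gaussianWeight (dualPrecision n W) (dualSource n (spectralSource n l ξ₁ ξ₂))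
            (fun k => pauliChain a b V k.1 k.2)) =
      -((Real.pi / 4 : ℂ) ^ (2 * n + 1) * Complex.exp (-(2 * n + 1) * l ^ 2 / 4)) *
        G2 n W l ξ₁ ξ₂ a b V := by
  have hdensity : ((∏ j, (Real.pi / 4 * (a j - b j) ^ 2) : ℝ) : ℂ) =
      (Real.pi / 4 : ℂ) ^ (2 * n + 1) * ∏ j, ((a j - b j : ℝ) : ℂ) ^ 2 := by
    push_cast
    rw [Finset.prod_mul_distrib, Finset.prod_const, Finset.card_univ, Fintype.card_fin]
  rw [prod_det_mul_gaussianWeight_pauliChain W l ξ₁ ξ₂ ha hb, hdensity, G2_eq]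
  ring

theorem integral_det_dualBlocks_mul_gaussianWeight (W l ξ₁ ξ₂ : ℝ)
    (μ : Measure (unitaryGroup (Fin 2) ℂ)) [μ.IsHaarMeasure] [IsProbabilityMeasure μ] :
    ∫ x, realEval x (dualBlocks n (l / 2)).det *
        gaussianWeight (dualPrecision n W) (dualSource n (spectralSource n l ξ₁ ξ₂)) x =
      -((Real.pi / 4 : ℂ) ^ (2 * n + 1) * Complex.exp (-(2 * n + 1) * l ^ 2 / 4)) *
        ∫ ab : (Fin (2 * n + 1) → ℝ) × (Fin (2 * n + 1) → ℝ), ∫ V,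
          G2 n W l ξ₁ ξ₂ ab.1 ab.2 V ∂(Measure.pi fun _ => μ) := by
  have hcurry := measurePreserving_curry_symm (α := ℝ) (Fin (2 * n + 1)) (Fin 4)
  have hint := (hcurry.integrable_comp_emb (MeasurableEquiv.measurableEmbedding _)).mpr
    (integrable_realEval_mul_gaussianWeight (dualSource n (spectralSource n l ξ₁ ξ₂))
      (posDef_dualPrecision n W) (dualBlocks n (l / 2)).det)
  have hne : ∀ᵐ a : Fin (2 * n + 1) → ℝ, ∀ j, a j ≠ 0 :=
    ae_all_iff.mpr fun j => Measure.ae_eval_ne _ j 0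
  rw [← hcurry.integral_comp', ← integral_const_mul]
  refine (integral_eq_integral_pauliChain μ hint).trans (integral_congr_ae ?_)
  filter_upwards [Measure.quasiMeasurePreserving_fst.ae hne,
    Measure.quasiMeasurePreserving_snd.ae hne] with ab ha hb
  rw [← integral_const_mul]
  refine integral_congr_ae (.of_forall fun V => ?_)
  dsimp only [Function.comp_apply]
  rw [← weylDensity_mul_prod_det_mul_gaussianWeight_pauliChain W l ξ₁ ξ₂ ha hb,
    realEval_det_dualBlocks]
  rfl

theorem Cxi_eq {l : ℝ} (hl : rho l ≠ 0) (ξ₁ ξ₂ : ℝ) :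
    (Cxi n l ξ₁ ξ₂ : ℂ) = Complex.exp (-(2 * n + 1) * l ^ 2 / 4) /
      Complex.exp (-(2 * n + 1) *
        (spectralSource n l ξ₁ ξ₂ 0 ^ 2 + spectralSource n l ξ₁ ξ₂ 1 ^ 2) / 2) := by
  have hl' : (rho l : ℂ) ≠ 0 := mod_cast hl
  have hN : (2 * n + 1 : ℂ) ≠ 0 := mod_cast (2 * n).succ_ne_zero
  rw [← Complex.exp_sub, Cxi, Complex.ofReal_exp]
  congr 1
  simp only [spectralSource, cons_val_zero, cons_val_one]
  push_cast
  field_simp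
  ring

theorem rho_pos {l : ℝ} (hl : l ∈ Set.Ioo (-2) 2) : 0 < rho l := by
  have : 0 < 4 - l ^ 2 := by nlinarith [hl.1, hl.2]
  unfold rho
  positivity

theorem pi_div_four_pow_div_pi_pow (N : ℕ) :
    (Real.pi / 4 : ℂ) ^ N / (Real.pi : ℂ) ^ (2 * N) = ((4 * Real.pi : ℝ) : ℂ) ^ (-(N : ℤ)) := by
  have hpi : (Real.pi : ℂ) ≠ 0 := mod_cast Real.pi_ne_zero
  rw [_root_.zpow_neg, zpow_natCast, pow_mul, ← div_pow, ← inv_pow]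
  congr 1
  push_cast
  field_simp

end EigenvalueRepresentation

/-- the representation of `F₂` as an integral over eigenvalues
`a, b ∈ ℝ^N` and unitary matrices `U_{−n}, V_{−n+1},…,V_n ∈ U(2)` (normalized Haar
measure `μ`):
`F₂ = −C(ξ)(det J)^{−2}(4π)^{−N}·∫ … dμ(U_{−n}) da db ∏dμ(V_q)`. -/
theorem F2_eigenvalue_representation (n : ℕ) (W : ℝ) (hW : 0 < W)
    (l0 : ℝ) (hl0 : l0 ∈ Set.Ioo (-2 : ℝ) 2) (ξ₁ ξ₂ : ℝ)
    (μ : Measure (Matrix.unitaryGroup (Fin 2) ℂ))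
    [μ.IsHaarMeasure] [IsProbabilityMeasure μ] :
    F2 n W (l0 + ξ₁ / ((2*n+1) * rho l0)) (l0 + ξ₂ / ((2*n+1) * rho l0))
      = -((Cxi n l0 ξ₁ ξ₂ : ℝ) : ℂ) * (((Jmat n W).det : ℝ) : ℂ)^(-2 : ℤ) *
          (((4 * Real.pi : ℝ) : ℂ))^(-((2*n+1 : ℕ) : ℤ)) *
          ∫ ab : (Fin (2*n+1) → ℝ) × (Fin (2*n+1) → ℝ),
            ∫ V : Fin (2*n+1) → Matrix.unitaryGroup (Fin 2) ℂ,
              G2 n W l0 ξ₁ ξ₂ ab.1 ab.2 V ∂(Measure.pi fun _ => μ) := by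
  have hdet : (((Jmat n W).det : ℝ) : ℂ) ^ (-2 : ℤ) = (((Jmat n W).det : ℂ) ^ 2)⁻¹ := by
    rw [zpow_neg]
    rfl
  rw [F2_eq_dualExpectation n W hW _ _ (l0 / 2), sub_eq_spectralSource, gaussianExpectation_apply,
    Complex.ofReal_div, Complex.ofReal_ofNat,
    integral_det_dualBlocks_mul_gaussianWeight W l0 ξ₁ ξ₂ μ, integral_gaussianWeight_dualPrecision,
    Cxi_eq (rho_pos hl0).ne', hdet, ← pi_div_four_pow_div_pi_pow]
  ring
end

section
/- Let x∈ℂ and m≥1 be such that S_m(x):=det(−Δ^{(m)}+x·I)≠0, and set T_0(x)=1 and T_k(x)=det(−Δ₁^{(k)}+x·I) for k≥1. Then for every i∈{1,…,m}: ((−Δ^{(m)}+x·I)^{−1})_{ii} = T_{i−1}(x)·T_{m−i}(x)/S_m(x). Moreover, for m≥2: ((−Δ^{(m)}+x·I)^{−1})_{11} − ((−Δ^{(m)}+x·I)^{−1})_{1m} = (T_{m−1}(x)−1)/S_m(x). -/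
/-- `−Δ₁^{(m)} = −Δ^{(m)} + E₁₁`, i.e. diagonal `(2,2,…,2,1)`. -/
noncomputable def negLap1 (m : ℕ) : Matrix (Fin m) (Fin m) ℝ :=
  negLap m + Matrix.of fun (i j : Fin m) => if (i : ℕ) = 0 ∧ (j : ℕ) = 0 then (1:ℝ) else 0

/-- `T_k(x) = det(−Δ₁^{(k)} + x·I)` (with `T_0 = 1`, the determinant of the empty matrix). -/
noncomputable def detT (x : ℂ) (k : ℕ) : ℂ :=
  (((negLap1 k).map Complex.ofReal) + x • 1).det

/-!
Everything is read off from Cramer's rule. Deleting row and column `i` of the tridiagonal matrix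
`-Δ + x` decouples it into two blocks: the leading one lost its right end and the trailing one its
left end, so that (after reversing the leading block) both are of the form `-Δ₁ + x`. Deleting the
last row and the first column instead leaves a triangular matrix with diagonal entries `-1`, whose
determinant cancels the sign of the cofactor, so the corner entry of the inverse is `1 / S_m(x)`.
-/

section Adjugate

variable {R : Type*} [CommRing R]

theorem adjugate_apply_self_eq_det_ne {ι : Type*} [Fintype ι] [DecidableEq ι]
    (A : Matrix ι ι R) (i : ι) : A.adjugate i i = (A.toSquareBlockProp (· ≠ i)).det := by
  have block_ne : (A.updateRow i (Pi.single i 1)).toSquareBlockProp (· ≠ i) =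
      A.toSquareBlockProp (· ≠ i) := by
    ext j k
    simp [Matrix.toSquareBlockProp_def, Matrix.updateRow_ne j.2]
  have block_eq : ((A.updateRow i (Pi.single i 1)).toSquareBlockProp (¬ · ≠ i)).det = 1 := by
    have : Unique {j // ¬ j ≠ i} := ⟨⟨i, by simp⟩, fun j => Subtype.ext (not_not.1 j.2)⟩
    rw [Matrix.det_unique]
    simp [Matrix.toSquareBlockProp_def, not_not.1 (default : {j // ¬ j ≠ i}).2]
  rw [Matrix.adjugate_apply, Matrix.twoBlockTriangular_det _ (· ≠ i), block_ne, block_eq, mul_one]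
  intro j hj k hk
  rw [not_not.1 hj, Matrix.updateRow_self, Pi.single_eq_of_ne hk]

theorem adjugate_apply_self_eq_det_lt_mul_det_gt {ι : Type*} [Fintype ι] [LinearOrder ι]
    (A : Matrix ι ι R) (i : ι) (hA : ∀ j k, j < i → i < k → A j k = 0) :
    A.adjugate i i = (A.toSquareBlockProp (· < i)).det * (A.toSquareBlockProp (i < ·)).det := by
  have gt_of_not_lt (k : {k // k ≠ i}) (hk : ¬ k.1 < i) : i < k.1 :=
    lt_of_le_of_ne (not_lt.1 hk) k.2.symm
  let ltEquiv : {j : {j // j ≠ i} // j.1 < i} ≃ {j // j < i} :=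
    Equiv.subtypeSubtypeEquivSubtype ne_of_lt
  let gtEquiv : {j : {j // j ≠ i} // ¬ j.1 < i} ≃ {j // i < j} :=
    (Equiv.subtypeEquivRight fun j => ⟨gt_of_not_lt j, fun hj => hj.not_gt⟩).trans
      (Equiv.subtypeSubtypeEquivSubtype ne_of_gt)
  rw [adjugate_apply_self_eq_det_ne,
    Matrix.twoBlockTriangular_det' (A.toSquareBlockProp (· ≠ i)) (·.1 < i)
      fun j hj k hk => hA j k hj (gt_of_not_lt k hk),
    ← Matrix.det_submatrix_equiv_self ltEquiv (A.toSquareBlockProp (· < i)),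
    ← Matrix.det_submatrix_equiv_self gtEquiv (A.toSquareBlockProp (i < ·))]
  rfl

theorem adjugate_zero_last_eq_prod {n : ℕ} (A : Matrix (Fin (n + 1)) (Fin (n + 1)) R)
    (hA : ∀ j k : Fin (n + 1), (j : ℕ) + 1 < k → A j k = 0) :
    A.adjugate 0 (Fin.last n) = (-1) ^ n * ∏ k : Fin n, A k.castSucc k.succ := by
  have lower : (A.submatrix Fin.castSucc Fin.succ).IsLowerTriangular := fun j k hjk =>
    hA _ _ (by simpa using hjk)
  rw [Matrix.adjugate_fin_succ_eq_det_submatrix, Fin.succAbove_last, Fin.succAbove_zero,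
    Matrix.det_of_isLowerTriangular _ lower]
  simp

end Adjugate

theorem inv_apply_eq_adjugate_div_det {ι K : Type*} [Fintype ι] [DecidableEq ι] [Field K]
    (A : Matrix ι ι K) (i j : ι) : A⁻¹ i j = A.adjugate i j / A.det := by
  rw [Matrix.inv_def, Matrix.smul_apply, Ring.inverse_eq_inv', smul_eq_mul, inv_mul_eq_div]

section ComplexShift

variable {ι κ : Type*} [DecidableEq ι] [DecidableEq κ]

/-- The matrix `A + x·I` over `ℂ`, for a real matrix `A`. Its determinant is `S_m(x)` for
`A = −Δ^{(m)}` and `T_k(x)` for `A = −Δ₁^{(k)}`. -/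
noncomputable def complexShift (x : ℂ) (A : Matrix ι ι ℝ) : Matrix ι ι ℂ :=
  A.map Complex.ofReal + x • 1

theorem complexShift_apply_ne (x : ℂ) (A : Matrix ι ι ℝ) {i j : ι} (hij : i ≠ j) :
    complexShift x A i j = A i j := by
  simp [complexShift, Matrix.one_apply_ne hij]

theorem complexShift_submatrix (x : ℂ) (A : Matrix ι ι ℝ) {e : κ → ι}
    (he : Function.Injective e) :
    (complexShift x A).submatrix e e = complexShift x (A.submatrix e e) := by
  simp [complexShift, Matrix.submatrix_add, Matrix.submatrix_smul, Matrix.submatrix_map,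
    Matrix.submatrix_one e he]

theorem complexShift_toSquareBlockProp (x : ℂ) (A : Matrix ι ι ℝ) (p : ι → Prop) :
    (complexShift x A).toSquareBlockProp p = complexShift x (A.toSquareBlockProp p) :=
  complexShift_submatrix x A Subtype.val_injective

theorem det_complexShift_eq_detT [Fintype ι] (x : ℂ) {A : Matrix ι ι ℝ} {k : ℕ} {e : Fin k ≃ ι}
    (hA : A.submatrix e e = negLap1 k) : (complexShift x A).det = detT x k := by
  rw [← Matrix.det_submatrix_equiv_self e, complexShift_submatrix x A e.injective, hA]
  rfl

end ComplexShift

section NegLap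

variable {m : ℕ}

theorem negLap_apply_eq_zero {i j : Fin m} (hij : (i : ℕ) + 1 < j) : negLap m i j = 0 := by
  simp only [negLap, Matrix.of_apply]
  grind

theorem negLap_castSucc_succ (k : Fin m) : negLap (m + 1) k.castSucc k.succ = -1 := by
  simp [negLap, Fin.castSucc_lt_succ.ne]

theorem negLap1_apply (i j : Fin m) :
    negLap1 m i j = if i = j then 2 - (if (i : ℕ) = m - 1 then 1 else 0)
      else if (i : ℕ) + 1 = j ∨ (j : ℕ) + 1 = i then -1 else 0 := by
  simp only [negLap1, negLap, Matrix.add_apply, Matrix.of_apply]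
  grind

/-- The listing `i - 1, …, 1, 0` of the indices below `i`, reversed so that the diagonal entry `1`
of `-Δ` at index `0` comes last, as in `-Δ₁`. -/
def finRevEquivLt (i : Fin m) : Fin i ≃ {j // j < i} :=
  Fin.revPerm.trans (Fin.castLEquiv i.is_lt.le)

/-- The listing `i + 1, …, m - 1` of the indices above `i`, increasing because the diagonal entry
`1` of `-Δ` at index `m - 1` is already last. -/
def finEquivGt (i : Fin m) : Fin (m - 1 - i) ≃ {j // i < j} where
  toFun k := ⟨⟨i + 1 + k, by omega⟩, by simp only [Fin.lt_def]; omega⟩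
  invFun j := ⟨j.1 - (i + 1), by omega⟩
  left_inv k := by simp
  right_inv j := Subtype.ext (Fin.ext (Nat.add_sub_of_le j.2))

theorem negLap_toSquareBlockProp_lt_submatrix (i : Fin m) :
    ((negLap m).toSquareBlockProp (· < i)).submatrix (finRevEquivLt i) (finRevEquivLt i) =
      negLap1 i := by
  ext a b
  simp only [negLap1_apply, negLap, Matrix.toSquareBlockProp_def, Matrix.submatrix_apply,
    Matrix.of_apply, finRevEquivLt, Fin.ext_iff, Equiv.trans_apply, Fin.castLEquiv, Equiv.coe_fn_mk,
    Fin.revPerm_apply, Fin.val_castLE, Fin.val_rev]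
  grind

theorem negLap_toSquareBlockProp_gt_submatrix (i : Fin m) :
    ((negLap m).toSquareBlockProp (i < ·)).submatrix (finEquivGt i) (finEquivGt i) =
      negLap1 (m - 1 - i) := by
  ext a b
  simp only [negLap1_apply, negLap, Matrix.toSquareBlockProp_def, Matrix.submatrix_apply,
    Matrix.of_apply, finEquivGt, Fin.ext_iff, Equiv.coe_fn_mk]
  grind

theorem complexShift_negLap_apply_eq_zero (x : ℂ) {i j : Fin m} (hij : (i : ℕ) + 1 < j) :
    complexShift x (negLap m) i j = 0 := by
  rw [complexShift_apply_ne x _ (by omega), negLap_apply_eq_zero hij, Complex.ofReal_zero]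

theorem adjugate_complexShift_negLap_apply_self (x : ℂ) (i : Fin m) :
    (complexShift x (negLap m)).adjugate i i = detT x i * detT x (m - 1 - i) := by
  have decoupled (j k : Fin m) (hj : j < i) (hk : i < k) : complexShift x (negLap m) j k = 0 :=
    complexShift_negLap_apply_eq_zero x (by omega)
  rw [adjugate_apply_self_eq_det_lt_mul_det_gt _ i decoupled,
    complexShift_toSquareBlockProp, complexShift_toSquareBlockProp,
    det_complexShift_eq_detT x (negLap_toSquareBlockProp_lt_submatrix i),
    det_complexShift_eq_detT x (negLap_toSquareBlockProp_gt_submatrix i)]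

theorem adjugate_complexShift_negLap_zero_last (x : ℂ) :
    (complexShift x (negLap (m + 1))).adjugate 0 (Fin.last m) = 1 := by
  rw [adjugate_zero_last_eq_prod _ fun _ _ => complexShift_negLap_apply_eq_zero x]
  simp [complexShift_apply_ne x _ Fin.castSucc_lt_succ.ne, negLap_castSucc_succ, ← mul_pow]

end NegLap

theorem detT_zero (x : ℂ) : detT x 0 = 1 := Matrix.det_isEmpty

/-- if `S_m(x) = det(−Δ^{(m)}+x·I) ≠ 0`, then for every `i ∈ {1,…,m}`
`((−Δ^{(m)}+xI)^{−1})_{ii} = T_{i−1}(x)·T_{m−i}(x)/S_m(x)`, and for `m ≥ 2`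
`((−Δ^{(m)}+xI)^{−1})_{11} − ((−Δ^{(m)}+xI)^{−1})_{1m} = (T_{m−1}(x)−1)/S_m(x)`.
(Here `i : Fin m` corresponds to the index `i+1 ∈ {1,…,m}`.) -/
theorem resolvent_entries (x : ℂ) (m : ℕ) (hm : 1 ≤ m)
    (M : Matrix (Fin m) (Fin m) ℂ)
    (hM : M = ((negLap m).map Complex.ofReal) + x • 1)
    (hS : M.det ≠ 0) :
    (∀ i : Fin m, M⁻¹ i i = detT x (i : ℕ) * detT x (m - 1 - (i : ℕ)) / M.det) ∧
    (2 ≤ m →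
      M⁻¹ ⟨0, by omega⟩ ⟨0, by omega⟩ - M⁻¹ ⟨0, by omega⟩ ⟨m - 1, by omega⟩
        = (detT x (m - 1) - 1) / M.det) := by
  obtain ⟨n, rfl⟩ : ∃ n, m = n + 1 := ⟨m - 1, by omega⟩
  have adjugate_diag (i : Fin (n + 1)) : M.adjugate i i = detT x i * detT x (n - i) :=
    hM ▸ adjugate_complexShift_negLap_apply_self x i
  have adjugate_corner : M.adjugate 0 (Fin.last n) = 1 :=
    hM ▸ adjugate_complexShift_negLap_zero_last x
  have inv_diag (i : Fin (n + 1)) : M⁻¹ i i = detT x i * detT x (n - i) / M.det := by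
    rw [inv_apply_eq_adjugate_div_det, adjugate_diag]
  have inv_corner : M⁻¹ 0 (Fin.last n) = 1 / M.det := by
    rw [inv_apply_eq_adjugate_div_det, adjugate_corner]
  refine ⟨inv_diag, fun _ => ?_⟩
  calc M⁻¹ 0 0 - M⁻¹ 0 (Fin.last n)
      = detT x 0 * detT x n / M.det - 1 / M.det := congrArg₂ _ (inv_diag 0) inv_corner
    _ = (detT x n - 1) / M.det := by rw [detT_zero, one_mul, sub_div]
end
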